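/- arXiv:2505.00504 — 2 statements merged into one kernel-verified Lean document; each statement's English description precedes it below -/
import Mathlib

section
/- For every finite simple graph G with at least 5 vertices, there exists a set D of at most 3 vertices such that the induced subgraph G − D contains three distinct vertices of equal degree (i.e., its repetition number is at least 3). -/
/-- Degree of `v` in `G`. -/
noncomputable def deg {V : Type*} (G : SimpleGraph V) (v : V) : ℕ :=
  Nat.card ↥(G.neighborSet v)

/-- Degree of `v` in the induced subgraph `G - D` obtained by deleting the vertex set `D`. -/
noncomputable def delDeg {V : Type*} (G : SimpleGraph V) (D : Finset V) (v : V) : ℕ :=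
  Nat.card ↥(G.neighborSet v \ ↑D)

open Classical in
/-- The number (`0` or `1`) of edges between `u` and `v`. -/
noncomputable def adjInd {V : Type*} (G : SimpleGraph V) (u v : V) : ℤ :=
  if G.Adj u v then 1 else 0

open Classical in
/-- The number of neighbours of `v` in `D`. -/
noncomputable def degIn {V : Type*} (G : SimpleGraph V) (D : Finset V) (v : V) : ℤ :=
  ((D.filter (G.Adj v)).card : ℤ)

/-- Vertex degree as an integer. -/
noncomputable def ideg {V : Type*} [Fintype V] (G : SimpleGraph V) (v : V) : ℤ :=
  degIn G Finset.univ v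

/-- No deletion of at most three vertices leaves three vertices of equal degree. -/
def NoRep {V : Type*} [Fintype V] (G : SimpleGraph V) : Prop :=
  ∀ D : Finset V, D.card ≤ 3 → ∀ x y z : V, x ∉ D → y ∉ D → z ∉ D → x ≠ y → x ≠ z → y ≠ z →
    ideg G x - degIn G D x = ideg G y - degIn G D y →
    ideg G y - degIn G D y = ideg G z - degIn G D z → False

theorem degIn_insert {V : Type*} {G : SimpleGraph V} [DecidableEq V] {D : Finset V} {a : V}
    (ha : a ∉ D) (x : V) : degIn G (insert a D) x = adjInd G x a + degIn G D x := by
  classical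
  unfold degIn adjInd
  rw [Finset.filter_insert]
  split_ifs with h
  · rw [Finset.card_insert_of_notMem (by simp [ha])]; push_cast; ring
  · simp

theorem degIn_empty {V : Type*} {G : SimpleGraph V} (x : V) : degIn G ∅ x = 0 := by
  simp [degIn]

section
variable {V : Type*} [Fintype V] {G : SimpleGraph V}

theorem NoRep.zero (h : NoRep G) {x y z : V} (hd : [x, y, z].Nodup)
    (h1 : ideg G x = ideg G y) (h2 : ideg G y = ideg G z) : False := by
  simp at hd
  exact h ∅ (by simp) x y z (by simp) (by simp) (by simp) (by tauto) (by tauto) (by tauto)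
    (by simpa [degIn_empty] using h1) (by simpa [degIn_empty] using h2)

theorem NoRep.one (h : NoRep G) (x y z a : V) (hd : [x, y, z, a].Nodup)
    (h1 : ideg G x - adjInd G x a = ideg G y - adjInd G y a)
    (h2 : ideg G y - adjInd G y a = ideg G z - adjInd G z a) : False := by
  classical
  simp at hd
  have key : ∀ v, degIn G {a} v = adjInd G v a := fun v => by
    rw [← insert_empty_eq, degIn_insert (by simp), degIn_empty]; simp
  refine h {a} (by simp) x y z (by grind) (by grind) (by grind) (by grind) (by grind)
    (by grind) ?_ ?_
  · have := key x; have := key y; grind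
  · have := key y; have := key z; grind

theorem NoRep.two (h : NoRep G) (x y z a b : V) (hd : [x, y, z, a, b].Nodup)
    (h1 : ideg G x - adjInd G x a - adjInd G x b = ideg G y - adjInd G y a - adjInd G y b)
    (h2 : ideg G y - adjInd G y a - adjInd G y b = ideg G z - adjInd G z a - adjInd G z b) :
    False := by
  classical
  simp at hd
  have key : ∀ v, degIn G {a, b} v
      = adjInd G v a + adjInd G v b := fun v => by
    rw [degIn_insert (by grind), ← insert_empty_eq, degIn_insert (by simp), degIn_empty]; simp
  refine h {a, b} (Finset.card_le_two.trans (by simp)) x y z (by grind) (by grind) (by grind)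
    (by grind) (by grind)
    (by grind) ?_ ?_
  · have := key x; have := key y; grind
  · have := key y; have := key z; grind

theorem NoRep.three (h : NoRep G) (x y z a b c : V) (hd : [x, y, z, a, b, c].Nodup)
    (h1 : ideg G x - adjInd G x a - adjInd G x b - adjInd G x c
      = ideg G y - adjInd G y a - adjInd G y b - adjInd G y c)
    (h2 : ideg G y - adjInd G y a - adjInd G y b - adjInd G y c
      = ideg G z - adjInd G z a - adjInd G z b - adjInd G z c) : False := by
  classical
  simp at hd
  have key : ∀ v, degIn G {a, b, c} v
      = adjInd G v a + (adjInd G v b + adjInd G v c) := fun v => by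
    rw [degIn_insert (by grind), degIn_insert (by grind), ← insert_empty_eq,
      degIn_insert (by simp), degIn_empty]; simp
  refine h {a, b, c} Finset.card_le_three x y z (by grind) (by grind) (by grind)
    (by grind) (by grind)
    (by grind) ?_ ?_
  · have := key x; have := key y; grind
  · have := key y; have := key z; grind

open Classical in
/-- The neighbours of `u` other than `v` that are not neighbours of `v`. -/
noncomputable def priv (G : SimpleGraph V) (u v : V) : Finset V :=
  Finset.univ.filter fun w => w ≠ v ∧ G.Adj u w ∧ ¬ G.Adj v w

theorem mem_priv {u v w : V} : w ∈ priv G u v ↔ w ≠ v ∧ G.Adj u w ∧ ¬ G.Adj v w := by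
  classical
  simp [priv]

open Classical in
theorem ideg_eq_priv (u v : V) : ideg G u = ((priv G u v).card : ℤ) + adjInd G u v
    + ((Finset.univ.filter fun w => G.Adj u w ∧ G.Adj v w).card : ℤ) := by
  classical
  have h1 := Finset.card_filter_add_card_filter_not (s := Finset.univ.filter (G.Adj u)) (G.Adj v)
  rw [Finset.filter_filter, Finset.filter_filter] at h1
  have h2 : ((Finset.univ.filter fun w => G.Adj u w ∧ ¬ G.Adj v w).card : ℤ)
      = (priv G u v).card + adjInd G u v := by
    unfold adjInd
    split_ifs with h
    · have : (Finset.univ.filter fun w => G.Adj u w ∧ ¬ G.Adj v w) = insert v (priv G u v) := by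
        ext w; simp [mem_priv]; by_cases hw : w = v <;> simp [hw, h]
      rw [this, Finset.card_insert_of_notMem (by simp [mem_priv])]; simp
    · have : (Finset.univ.filter fun w => G.Adj u w ∧ ¬ G.Adj v w) = priv G u v := by
        ext w; simp [mem_priv]; by_cases hw : w = v <;> simp [hw, h]
      rw [this]; simp
  unfold ideg degIn
  rw [← h1]; push_cast; rw [h2]; ring

theorem priv_balance (u v : V) :
    ideg G u - ideg G v = ((priv G u v).card : ℤ) - ((priv G v u).card : ℤ) := by
  classical
  rw [ideg_eq_priv u v, ideg_eq_priv v u]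
  have : adjInd G u v = adjInd G v u := by simp [adjInd, G.adj_comm]
  have h2 : (Finset.univ.filter fun w => G.Adj u w ∧ G.Adj v w)
    = (Finset.univ.filter fun w => G.Adj v w ∧ G.Adj u w) := by simp only [and_comm]
  rw [this, h2]; ring

open Classical in
theorem card_erase_priv (u v w : V) (hw : w ≠ v) (hv : ¬ G.Adj v w) :
    (((priv G u v).erase w).card : ℤ) = (priv G u v).card - adjInd G u w := by
  unfold adjInd
  split_ifs with h
  · have := Finset.card_erase_add_one (mem_priv.2 ⟨hw, h, hv⟩ : w ∈ priv G u v)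
    omega
  · rw [Finset.erase_eq_of_notMem (by simp [mem_priv, h])]; simp

end

section
variable {V : Type*}

theorem adjInd_comm (G : SimpleGraph V) (u v : V) : adjInd G u v = adjInd G v u := by
  by_cases h : G.Adj u v
  · simp [adjInd, h, h.symm]
  · simp [adjInd, h, G.adj_comm v u]

theorem adjInd_of_adj {G : SimpleGraph V} {u v : V} (h : G.Adj u v) : adjInd G u v = 1 := by
  simp [adjInd, h]

theorem adjInd_of_not_adj {G : SimpleGraph V} {u v : V} (h : ¬ G.Adj u v) : adjInd G u v = 0 := by
  simp [adjInd, h]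

theorem adjInd_eq_zero_or_one (G : SimpleGraph V) (u v : V) :
    adjInd G u v = 0 ∨ adjInd G u v = 1 := by
  unfold adjInd; split_ifs <;> simp

theorem adjInd_compl (G : SimpleGraph V) {u v : V} (h : u ≠ v) :
    adjInd Gᶜ u v = 1 - adjInd G u v := by
  unfold adjInd
  by_cases hv : G.Adj u v <;> simp [hv, h]

theorem degIn_compl (G : SimpleGraph V) {D : Finset V} {v : V} (hv : v ∉ D) :
    degIn Gᶜ D v = D.card - degIn G D v := by
  classical
  have h := Finset.card_filter_add_card_filter_not (s := D) (G.Adj v)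
  have : D.filter (Gᶜ.Adj v) = D.filter (fun w => ¬ G.Adj v w) := by
    refine Finset.filter_congr fun w hw => ?_
    have : v ≠ w := fun e => hv (e ▸ hw)
    simp [this]
  unfold degIn
  have h3 := congrArg Finset.card this
  convert (by omega : ((D.filter (Gᶜ.Adj v)).card : ℤ) = D.card - (D.filter (G.Adj v)).card)

theorem ideg_compl [Fintype V] (G : SimpleGraph V) (v : V) :
    ideg Gᶜ v = Fintype.card V - 1 - ideg G v := by
  classical
  have h := degIn_compl G (D := Finset.univ.erase v) (v := v) (by simp)
  have e : ∀ H : SimpleGraph V, degIn H (Finset.univ.erase v) v = ideg H v := fun H => by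
    unfold ideg degIn
    congr 2
    ext w; simp; rintro hw rfl; exact H.irrefl hw
  rw [e, e] at h
  have : ((Finset.univ.erase v).card : ℤ) + 1 = Fintype.card V := by
    exact_mod_cast Finset.card_erase_add_one (Finset.mem_univ v)
  omega

theorem NoRep.compl [Fintype V] {G : SimpleGraph V} (h : NoRep G) : NoRep Gᶜ := by
  intro D hD x y z hx hy hz hxy hxz hyz h1 h2
  rw [degIn_compl G hx, degIn_compl G hy, ideg_compl, ideg_compl] at h1
  rw [degIn_compl G hz, degIn_compl G hy, ideg_compl, ideg_compl] at h2
  exact h D hD x y z hx hy hz hxy hxz hyz (by omega) (by omega)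

theorem ideg_nonneg [Fintype V] (G : SimpleGraph V) (v : V) : 0 ≤ ideg G v := by
  unfold ideg degIn; positivity

theorem ideg_pos_of_adj [Fintype V] {G : SimpleGraph V} {v w : V} (h : G.Adj v w) :
    0 < ideg G v := by
  classical
  unfold ideg degIn
  exact_mod_cast Finset.card_pos.2 ⟨w, by simp [h]⟩

theorem degIn_induce (G : SimpleGraph V) (s : Set V) (D : Finset s) (v : s) :
    degIn (G.induce s) D v = degIn G (D.map (Function.Embedding.subtype _)) v := by
  classical
  unfold degIn
  rw [← Finset.card_map (Function.Embedding.subtype _)]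
  congr 2
  ext w
  simp

theorem ideg_induce_of_isolated [Fintype V] {G : SimpleGraph V} {i : V}
    [Fintype ({i}ᶜ : Set V)] (hi : ideg G i = 0) (v : ({i}ᶜ : Set V)) :
    ideg (G.induce {i}ᶜ) v = ideg G v := by
  classical
  unfold ideg
  rw [degIn_induce]
  unfold degIn
  congr 2
  ext w
  simp
  rintro hw rfl
  have := ideg_pos_of_adj hw.symm
  omega

theorem NoRep.induce_of_isolated [Fintype V] {G : SimpleGraph V} (h : NoRep G) {i : V}
    [Fintype ({i}ᶜ : Set V)] (hi : ideg G i = 0) : NoRep (G.induce {i}ᶜ) := by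
  intro D hD x y z hx hy hz hxy hxz hyz h1 h2
  rw [ideg_induce_of_isolated hi, ideg_induce_of_isolated hi, degIn_induce, degIn_induce] at h1 h2
  have m : ∀ v : ({i}ᶜ : Set V), v ∉ D → (v : V) ∉ D.map (Function.Embedding.subtype _) :=
    fun v hv => by simpa using fun _ => hv
  exact h _ (by simpa using hD) x y z (m _ hx) (m _ hy) (m _ hz)
    (by simpa [Subtype.ext_iff] using hxy)
    (by simpa [Subtype.ext_iff] using hxz) (by simpa [Subtype.ext_iff] using hyz) h1 h2

theorem ideg_sub_degIn_compl [Fintype V] [DecidableEq V] (G : SimpleGraph V) (v : V)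
    (S : Finset V) : ideg G v - degIn G Sᶜ v = degIn G S v := by
  classical
  have : Finset.univ.filter (G.Adj v) = S.filter (G.Adj v) ∪ Sᶜ.filter (G.Adj v) := by
    rw [← Finset.filter_union]; simp
  unfold ideg degIn
  rw [this, Finset.card_union_of_disjoint (Finset.disjoint_filter_filter disjoint_compl_right)]
  push_cast; ring

theorem NoRep.not_clique_five [Fintype V] {G : SimpleGraph V} (h : NoRep G)
    (h5 : Fintype.card V ≤ 6) {x y z : V} (hxy : G.Adj x y) (hxz : G.Adj x z)
    (hyz : G.Adj y z) : False := by
  classical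
  have n1 := hxy.ne; have n2 := hxz.ne; have n3 := hyz.ne
  have e : ∀ v ∈ ({x, y, z} : Finset V), degIn G {x, y, z} v = 2 := by
    intro v hv
    have hh : ({x, y, z} : Finset V).filter (G.Adj v) = ({x, y, z} : Finset V).erase v := by
      ext w
      simp at hv ⊢
      have := hxy.symm; have := hxz.symm; have := hyz.symm
      have : ∀ a, ¬ G.Adj a a := fun a => G.irrefl
      rcases hv with rfl | rfl | rfl <;> grind
    unfold degIn
    rw [hh, Finset.card_erase_of_mem hv, Finset.card_eq_three.2 ⟨x, y, z, n1, n2, n3, rfl⟩]; simp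
  have ht : ({x, y, z} : Finset V).card = 3 := Finset.card_eq_three.2 ⟨x, y, z, n1, n2, n3, rfl⟩
  refine h ({x, y, z} : Finset V)ᶜ ?_ x y z (by simp) (by simp) (by simp) n1 n2 n3 ?_ ?_
  · rw [Finset.card_compl, ht]; omega
  · rw [ideg_sub_degIn_compl, ideg_sub_degIn_compl, e _ (by simp), e _ (by simp)]
  · rw [ideg_sub_degIn_compl, ideg_sub_degIn_compl, e _ (by simp), e _ (by simp)]

theorem NoRep.ideg_le_two [Fintype V] {G : SimpleGraph V} (h : NoRep G)
    (h5 : Fintype.card V ≤ 6) (v : V) : ideg G v ≤ 2 := by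
  classical
  by_contra hv
  have : 2 < (Finset.univ.filter (G.Adj v)).card := by unfold ideg degIn at hv; omega
  obtain ⟨a, ha, b, hb, c, hc, hab, hac, hbc⟩ := Finset.two_lt_card.1 this
  simp at ha hb hc
  have h1 : ¬ G.Adj a b := fun e => h.not_clique_five h5 ha hb e
  have h2 : ¬ G.Adj a c := fun e => h.not_clique_five h5 ha hc e
  have h3 : ¬ G.Adj b c := fun e => h.not_clique_five h5 hb hc e
  exact h.compl.not_clique_five (x := a) (y := b) (z := c) h5 (by simp [*]) (by simp [*])
    (by simp [*])

theorem not_noRep_of_card_eq_five [Fintype V] {G : SimpleGraph V} (h5 : Fintype.card V = 5) :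
    ¬ NoRep G := by
  classical
  intro h
  have e : ∀ v, ideg G v = 2 := fun v => by
    have h1 := h.ideg_le_two (by omega) v
    have h2 := h.compl.ideg_le_two (by omega) v
    rw [ideg_compl] at h2
    omega
  obtain ⟨x, _, y, _, z, _, n1, n2, n3⟩ :=
    Finset.two_lt_card.1 (show 2 < (Finset.univ : Finset V).card by rw [Finset.card_univ]; omega)
  exact h.zero (x := x) (y := y) (z := z) (by simp [*]) (by simp [e]) (by simp [e])

end

section
variable {V : Type*} [Fintype V] {G : SimpleGraph V}

/-- The configuration forced by three vertices with degrees in `{e, e + 1}`: `p` and `q` have the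
same neighbours outside `{s, p, q}`, and `s` is adjacent to `p` but not to `q`. -/
structure HeavyTriple (G : SimpleGraph V) (e : ℤ) (s p q : V) : Prop where
  adj : G.Adj s p
  not_adj : ¬ G.Adj s q
  ne_sq : s ≠ q
  ne_pq : p ≠ q
  twin : ∀ w, w ≠ s → w ≠ p → w ≠ q → (G.Adj p w ↔ G.Adj q w)
  deg_p : ideg G p = e + 1
  deg_q : ideg G q = e
  le_deg_s : e ≤ ideg G s
  deg_s_le : ideg G s ≤ e + 1

theorem HeavyTriple.compl {e : ℤ} {s p q : V} (h : HeavyTriple G e s p q) :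
    HeavyTriple Gᶜ (Fintype.card V - 2 - e) s q p where
  adj := by simp [h.ne_sq, h.not_adj]
  not_adj := by simp [h.adj]
  ne_sq := h.adj.ne
  ne_pq := h.ne_pq.symm
  twin w h1 h2 h3 := by
    have := h.twin w h1 h3 h2
    simp [h2.symm, h3.symm, this]
  deg_p := by rw [ideg_compl, h.deg_q]; ring
  deg_q := by rw [ideg_compl, h.deg_p]; ring
  le_deg_s := by rw [ideg_compl]; linarith [h.deg_s_le]
  deg_s_le := by rw [ideg_compl]; linarith [h.le_deg_s]

theorem heavyTriple_of_no_private {e : ℤ} {x y z : V} (hd : [x, y, z].Nodup)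
    (hx : ideg G x = e + 1) (hy : ideg G y = e + 1) (hz : ideg G z = e)
    (hp : ∀ w, w ≠ x → w ≠ z → G.Adj y w → G.Adj z w) : HeavyTriple G e x y z := by
  classical
  have hb := priv_balance (G := G) y z
  have hs : priv G y z ⊆ {x} := fun w hw => by
    rw [mem_priv] at hw
    by_contra hwx
    exact hw.2.2 (hp w (by simpa using hwx) hw.1 hw.2.1)
  have hc := Finset.card_le_card hs
  simp only [Finset.card_singleton] at hc
  have hc0 : (priv G z y).card = 0 := by omega
  have hc1 : (priv G y z).card = 1 := by omega
  have hxy : x ∈ priv G y z := by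
    obtain ⟨a, ha⟩ := Finset.card_pos.1 (by omega : 0 < (priv G y z).card)
    rwa [← Finset.mem_singleton.1 (hs ha)]
  rw [Finset.card_eq_zero] at hc0
  have hzy : ∀ w, w ≠ y → G.Adj z w → G.Adj y w := fun w h1 h2 => by
    by_contra h3
    have := mem_priv.2 ⟨h1, h2, h3⟩
    rw [hc0] at this
    simp at this
  rw [mem_priv] at hxy
  simp at hd
  exact ⟨hxy.2.1.symm, fun k => hxy.2.2 k.symm, by tauto, by tauto,
    fun w h1 h2 h3 => ⟨hp w h1 h3, hzy w h2⟩, hy, hz, by omega, by omega⟩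

theorem NoRep.exists_heavyTriple_aux (h : NoRep G) {e : ℤ} {x y z : V} (hd : [x, y, z].Nodup)
    (hx : ideg G x = e + 1) (hy : ideg G y = e + 1) (hz : ideg G z = e) :
    HeavyTriple G e x y z ∨ HeavyTriple G e y x z := by
  by_contra! hcon
  have h1 : ¬ ∀ w, w ≠ x → w ≠ z → G.Adj y w → G.Adj z w := fun k =>
    hcon.1 (heavyTriple_of_no_private hd hx hy hz k)
  have h2 : ¬ ∀ w, w ≠ y → w ≠ z → G.Adj x w → G.Adj z w := fun k =>
    hcon.2 (heavyTriple_of_no_private (by grind) hy hx hz k)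
  push Not at h1 h2
  obtain ⟨a, a1, a2, a3, a4⟩ := h1
  obtain ⟨b, b1, b2, b3, b4⟩ := h2
  have ha := a3.ne
  have hb := b3.ne
  have h3 : ¬ G.Adj x a := fun k => h.one x y z a (by grind) (by grind [adjInd]) (by grind [adjInd])
  have h4 : ¬ G.Adj y b := fun k => h.one x y z b (by grind) (by grind [adjInd]) (by grind [adjInd])
  exact h.two x y z a b (by grind) (by grind [adjInd]) (by grind [adjInd])

theorem NoRep.exists_heavyTriple_of_high (h : NoRep G) {e : ℤ} {x y z : V} (hd : [x, y, z].Nodup)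
    (hx : ideg G x = e + 1) (hy : ideg G y = e + 1) (hz : ideg G z = e) :
    ∃ s p q, HeavyTriple G e s p q :=
  (h.exists_heavyTriple_aux hd hx hy hz).elim (fun k => ⟨_, _, _, k⟩) (fun k => ⟨_, _, _, k⟩)

theorem NoRep.exists_heavyTriple_of_low (h : NoRep G) {e : ℤ} {x y z : V} (hd : [x, y, z].Nodup)
    (hx : ideg G x = e) (hy : ideg G y = e) (hz : ideg G z = e + 1) :
    ∃ s p q, HeavyTriple G e s p q := by
  obtain ⟨s, p, q, k⟩ := h.compl.exists_heavyTriple_of_high (e := Fintype.card V - 2 - e) hd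
    (by rw [ideg_compl, hx]; ring) (by rw [ideg_compl, hy]; ring) (by rw [ideg_compl, hz]; ring)
  have k2 := k.compl
  rw [compl_compl, sub_sub_cancel] at k2
  exact ⟨_, _, _, k2⟩

theorem NoRep.exists_heavyTriple (h : NoRep G) {e : ℤ} {x y z : V} (hd : [x, y, z].Nodup)
    (hx : ideg G x = e ∨ ideg G x = e + 1) (hy : ideg G y = e ∨ ideg G y = e + 1)
    (hz : ideg G z = e ∨ ideg G z = e + 1) : ∃ s p q, HeavyTriple G e s p q := by
  rcases hx with hx | hx <;> rcases hy with hy | hy <;> rcases hz with hz | hz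
  · exact (h.zero hd (by omega) (by omega)).elim
  · exact h.exists_heavyTriple_of_low hd hx hy hz
  · exact h.exists_heavyTriple_of_low (x := x) (y := z) (z := y) (by grind) hx hz hy
  · exact h.exists_heavyTriple_of_high (x := y) (y := z) (z := x) (by grind) hy hz hx
  · exact h.exists_heavyTriple_of_low (x := y) (y := z) (z := x) (by grind) hy hz hx
  · exact h.exists_heavyTriple_of_high (x := x) (y := z) (z := y) (by grind) hx hz hy
  · exact h.exists_heavyTriple_of_high hd hx hy hz
  · exact (h.zero hd (by omega) (by omega)).elim


/-- Apart from `s` and `p`, the vertex `v` has the same closed neighbourhood as `q`. -/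
structure IsClone (G : SimpleGraph V) (e : ℤ) (s p q v : V) : Prop where
  ne_s : v ≠ s
  ne_p : v ≠ p
  adj_p : G.Adj p v
  adj_q : G.Adj q v
  same : ∀ x, x ≠ s → x ≠ p → x ≠ q → x ≠ v → (G.Adj v x ↔ G.Adj q x)
  deg_eq : ideg G v = e + 1 + adjInd G v s

/-- Apart from `s`, `p` and one additional neighbour `w`, the vertex `v` has the same closed
neighbourhood as `q`. -/
structure IsCloneWith (G : SimpleGraph V) (e : ℤ) (s p q v w : V) : Prop where
  ne_s : v ≠ s
  ne_p : v ≠ p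
  adj_p : G.Adj p v
  adj_q : G.Adj q v
  w_ne_s : w ≠ s
  w_ne_p : w ≠ p
  w_ne_q : w ≠ q
  adj_w : G.Adj v w
  not_adj_w : ¬ G.Adj q w
  same : ∀ x, x ≠ s → x ≠ p → x ≠ q → x ≠ v → x ≠ w → (G.Adj v x ↔ G.Adj q x)
  deg_eq : ideg G v = e + 2 + adjInd G v s

theorem HeavyTriple.adj_of_deg_near (h : NoRep G) {e : ℤ} {s p q : V} (H : HeavyTriple G e s p q)
    (hpq : ¬ G.Adj p q) {u : V} (us : u ≠ s) (up : u ≠ p) (uq : u ≠ q)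
    (h1 : e - 2 ≤ ideg G u - adjInd G u s) (h2 : ideg G u - adjInd G u s ≤ e + 2) :
    G.Adj q u := by
  classical
  by_contra hqu
  obtain ⟨hsp, hsq, nsq, npq, tw, dp, dq, -, -⟩ := H
  have nsp := hsp.ne
  have hps := hsp.symm
  have hqs : ¬ G.Adj q s := fun k => hsq k.symm
  have hqp : ¬ G.Adj q p := fun k => hpq k.symm
  have hpu : ¬ G.Adj p u := by rwa [tw u us up uq]
  have hup : ¬ G.Adj u p := fun k => hpu k.symm
  have hb := priv_balance (G := G) u q
  have hc := card_erase_priv (G := G) u q s nsq hqs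
  have low : ∀ w ∈ (priv G u q).erase s, w ≠ s ∧ w ≠ p ∧ w ≠ q ∧ w ≠ u ∧
      G.Adj u w ∧ ¬ G.Adj q w ∧ ¬ G.Adj p w := fun w hw => by
    simp only [Finset.mem_erase, mem_priv] at hw
    have : w ≠ p := by rintro rfl; exact hup hw.2.2.1
    exact ⟨hw.1, this, hw.2.1, hw.2.2.1.ne', hw.2.2.1, hw.2.2.2,
      by rw [tw w hw.1 this hw.2.1]; exact hw.2.2.2⟩
  have high : ∀ w ∈ priv G q u, w ≠ s ∧ w ≠ p ∧ w ≠ q ∧ w ≠ u ∧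
      ¬ G.Adj u w ∧ G.Adj q w ∧ G.Adj p w := fun w hw => by
    simp only [mem_priv] at hw
    have h1 : w ≠ p := by rintro rfl; exact hqp hw.2.1
    have h2 : w ≠ s := by rintro rfl; exact hqs hw.2.1
    exact ⟨h2, h1, hw.2.1.ne', hw.1, hw.2.2, hw.2.1,
      by rw [tw w h2 h1 hw.2.1.ne']; exact hw.2.1⟩
  have ht : ideg G u - adjInd G u s - e = -2 ∨ ideg G u - adjInd G u s - e = -1 ∨
    ideg G u - adjInd G u s - e = 0 ∨ ideg G u - adjInd G u s - e = 1 ∨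
    ideg G u - adjInd G u s - e = 2 := by omega
  have ap := adjInd_of_adj hps
  have aq := adjInd_of_not_adj hqs
  rcases ht with ht | ht | ht | ht | ht
  · obtain ⟨a, ha, b, hb, hab⟩ := Finset.one_lt_card.1 (by omega : 1 < (priv G q u).card)
    have ha := high a ha
    have hb := high b hb
    exact h.three p q u s a b (by grind) (by grind [adjInd]) (by grind [adjInd])
  · obtain ⟨a, ha⟩ := Finset.card_pos.1 (by omega : 0 < (priv G q u).card)
    have ha := high a ha
    exact h.two p q u s a (by grind) (by grind [adjInd]) (by grind [adjInd])
  · exact h.one p q u s (by grind) (by grind [adjInd]) (by grind [adjInd])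
  · obtain ⟨a, ha⟩ := Finset.card_pos.1 (by omega : 0 < ((priv G u q).erase s).card)
    have ha := low a ha
    exact h.two p q u s a (by grind) (by grind [adjInd]) (by grind [adjInd])
  · obtain ⟨a, ha, b, hb, hab⟩ := Finset.one_lt_card.1
      (by omega : 1 < ((priv G u q).erase s).card)
    have ha := low a ha
    have hb := low b hb
    exact h.three p q u s a b (by grind) (by grind [adjInd]) (by grind [adjInd])

theorem HeavyTriple.isClone_or (h : NoRep G) {e : ℤ} {s p q : V} (H : HeavyTriple G e s p q)
    (hpq : ¬ G.Adj p q) {u : V} (us : u ≠ s) (up : u ≠ p) (uq : u ≠ q)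
    (h1 : e - 2 ≤ ideg G u - adjInd G u s) (h2 : ideg G u - adjInd G u s ≤ e + 2) :
    IsClone G e s p q u ∨ ∃ w, IsCloneWith G e s p q u w := by
  classical
  have hqu := H.adj_of_deg_near h hpq us up uq h1 h2
  obtain ⟨hsp, hsq, nsq, npq, tw, dp, dq, -, -⟩ := H
  have nsp := hsp.ne
  have hps := hsp.symm
  have hqs : ¬ G.Adj q s := fun k => hsq k.symm
  have hqp : ¬ G.Adj q p := fun k => hpq k.symm
  have hpu : G.Adj p u := by rwa [tw u us up uq]
  have hup : G.Adj u p := hpu.symm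
  have hb := priv_balance (G := G) u q
  have hc := card_erase_priv (G := G) u q s nsq hqs
  have hc2 := Finset.card_erase_add_one (by simp [mem_priv, *, hsp.ne'] : p ∈ (priv G u q).erase s)
  have lowi : ∀ w, w ∈ ((priv G u q).erase s).erase p ↔ w ≠ s ∧ w ≠ p ∧ w ≠ q ∧
      G.Adj u w ∧ ¬ G.Adj q w := fun w => by
    simp only [Finset.mem_erase, mem_priv]; tauto
  have low : ∀ w ∈ ((priv G u q).erase s).erase p, w ≠ s ∧ w ≠ p ∧ w ≠ q ∧ w ≠ u ∧
      G.Adj u w ∧ ¬ G.Adj q w ∧ ¬ G.Adj p w := fun w hw => by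
    rw [lowi] at hw
    exact ⟨hw.1, hw.2.1, hw.2.2.1, hw.2.2.2.1.ne', hw.2.2.2.1, hw.2.2.2.2,
      by rw [tw w hw.1 hw.2.1 hw.2.2.1]; exact hw.2.2.2.2⟩
  have high : ∀ w ∈ priv G q u, w ≠ s ∧ w ≠ p ∧ w ≠ q ∧ w ≠ u ∧
      ¬ G.Adj u w ∧ G.Adj q w ∧ G.Adj p w := fun w hw => by
    simp only [mem_priv] at hw
    have h1 : w ≠ p := by rintro rfl; exact hqp hw.2.1
    have h2 : w ≠ s := by rintro rfl; exact hqs hw.2.1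
    exact ⟨h2, h1, hw.2.1.ne', hw.1, hw.2.2, hw.2.1,
      by rw [tw w h2 h1 hw.2.1.ne']; exact hw.2.1⟩
  have ht : ideg G u - adjInd G u s - e = -2 ∨ ideg G u - adjInd G u s - e = -1 ∨
    ideg G u - adjInd G u s - e = 0 ∨ ideg G u - adjInd G u s - e = 1 ∨
    ideg G u - adjInd G u s - e = 2 := by omega
  have ap := adjInd_of_adj hps
  have aq := adjInd_of_not_adj hqs
  have same : (priv G q u).card = 0 → ∀ x, x ≠ u → G.Adj q x → G.Adj u x := fun hz x h1 h2 => by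
    rw [Finset.card_eq_zero] at hz
    by_contra h3
    have := mem_priv.2 ⟨h1, h2, h3⟩
    simp [hz] at this
  rcases ht with ht | ht | ht | ht | ht
  · obtain ⟨a, ha, b, hb, hab⟩ := Finset.one_lt_card.1 (by omega : 1 < (priv G q u).card)
    have ha := high a ha
    have hb := high b hb
    exact (h.three p q u s a b (by grind) (by grind [adjInd]) (by grind [adjInd])).elim
  · obtain ⟨a, ha⟩ := Finset.card_pos.1 (by omega : 0 < (priv G q u).card)
    have ha := high a ha
    exact (h.two p q u s a (by grind) (by grind [adjInd]) (by grind [adjInd])).elim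
  · exact (h.one p q u s (by grind) (by grind [adjInd]) (by grind [adjInd])).elim
  · have hx : ∀ x, x ∉ ((priv G u q).erase s).erase p := fun x hx => by
      have ha := low x hx
      exact h.two p q u s x (by grind) (by grind [adjInd]) (by grind [adjInd])
    have hx0 := Finset.card_eq_zero.2 (Finset.eq_empty_of_forall_notMem hx)
    have hy := same (by omega)
    refine Or.inl ⟨us, up, hpu, hqu, fun x x1 x2 x3 x4 => ⟨fun k => ?_, hy x x4⟩, by omega⟩
    by_contra h3
    exact hx x ((lowi x).2 ⟨x1, x2, x3, k, h3⟩)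
  · have hx0 : ¬ 1 < (((priv G u q).erase s).erase p).card := fun hx => by
      obtain ⟨a, ha, b, hb, hab⟩ := Finset.one_lt_card.1 hx
      have ha := low a ha
      have hb := low b hb
      exact h.three p q u s a b (by grind) (by grind [adjInd]) (by grind [adjInd])
    have hy := same (by omega)
    obtain ⟨w, hw⟩ := Finset.card_eq_one.1
      (by omega : (((priv G u q).erase s).erase p).card = 1)
    have hw2 := low w (by simp [hw])
    refine Or.inr ⟨w, us, up, hpu, hqu, hw2.1, hw2.2.1, hw2.2.2.1, hw2.2.2.2.2.1, hw2.2.2.2.2.2.1,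
      fun x x1 x2 x3 x4 x5 => ⟨fun k => ?_, hy x x4⟩, by omega⟩
    by_contra h3
    have := (lowi x).2 ⟨x1, x2, x3, k, h3⟩
    rw [hw] at this
    exact x5 (by simpa using this)


theorem NoRep.not_clone_clone (h : NoRep G) {e : ℤ} {s p q u v : V}
    (H : HeavyTriple G e s p q) (hpq : ¬ G.Adj p q) (huv : u ≠ v)
    (hu : IsClone G e s p q u) (hv : IsClone G e s p q v) : False := by
  obtain ⟨hsp, hsq, nsq, npq, tw, dp, dq, -, -⟩ := H
  obtain ⟨us, up, hpu, hqu, hu, du⟩ := hu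
  obtain ⟨vs, vp, hpv, hqv, hv, dv⟩ := hv
  exact h.two q u v s p (by grind [G.ne_of_adj]) (by grind [adjInd, G.adj_comm])
      (by grind [adjInd, G.adj_comm])

theorem NoRep.not_clone_cloneWith (h : NoRep G) {e : ℤ} {s p q u v w : V}
    (H : HeavyTriple G e s p q) (hpq : ¬ G.Adj p q)
    (huv : u ≠ v) (hu : IsClone G e s p q u) (hv : IsCloneWith G e s p q v w) : False := by
  obtain ⟨hsp, hsq, nsq, npq, tw, dp, dq, -, -⟩ := H
  obtain ⟨us, up, hpu, hqu, hu, du⟩ := hu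
  obtain ⟨vs, vp, hpv, hqv, ws, wp, wq, hvw, hqw, hv, dv⟩ := hv
  exact h.three q u v s p w (by grind [G.ne_of_adj]) (by grind [adjInd, G.adj_comm])
      (by grind [adjInd, G.adj_comm])

theorem NoRep.not_cloneWith_cloneWith (h : NoRep G) {e : ℤ} {s p q u v w x : V}
    (H : HeavyTriple G e s p q) (hpq : ¬ G.Adj p q) (huv : u ≠ v)
    (hu : IsCloneWith G e s p q u x) (hv : IsCloneWith G e s p q v w) : False := by
  obtain ⟨hsp, hsq, nsq, npq, tw, dp, dq, -, -⟩ := H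
  obtain ⟨us, up, hpu, hqu, xs, xp, xq, hux, hqx, hu, du⟩ := hu
  obtain ⟨vs, vp, hpv, hqv, ws, wp, wq, hvw, hqw, hv, dv⟩ := hv
  have hpx := (tw x xs xp xq).not.2 hqx
  have hpw := (tw w ws wp wq).not.2 hqw
  by_cases hxw : x = w
  · subst hxw
    exact h.three q u v s p x (by grind [G.ne_of_adj]) (by grind [adjInd, G.adj_comm])
      (by grind [adjInd, G.adj_comm])
  · have hvx : ¬ G.Adj v x := by grind [G.ne_of_adj]
    have huw : ¬ G.Adj u w := by grind [G.ne_of_adj]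
    by_cases h1 : G.Adj u s <;> by_cases h2 : G.Adj v s
    · exact h.three p u v x w q (by grind [G.ne_of_adj]) (by grind [adjInd, G.adj_comm])
        (by grind [adjInd, G.adj_comm])
    · exact h.two p u v x q (by grind [G.ne_of_adj]) (by grind [adjInd, G.adj_comm])
        (by grind [adjInd, G.adj_comm])
    · exact h.two p u v w q (by grind [G.ne_of_adj]) (by grind [adjInd, G.adj_comm])
        (by grind [adjInd, G.adj_comm])
    · exact h.one p u v q (by grind [G.ne_of_adj]) (by grind [adjInd, G.adj_comm])
        (by grind [adjInd, G.adj_comm])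

theorem NoRep.not_adj_of_isClone (h : NoRep G) {e : ℤ} {s p q v : V}
    (H : HeavyTriple G e s p q) (hpq : ¬ G.Adj p q) (hv : IsClone G e s p q v) :
    ¬ G.Adj v s := by
  classical
  intro hvs
  obtain ⟨hsp, hsq, nsq, npq, tw, dp, dq, ds1, ds2⟩ := H
  obtain ⟨vs, vp, hpv, hqv, hv, dv⟩ := hv
  have av := adjInd_of_adj hvs
  rcases (by omega : ideg G s = e ∨ ideg G s = e + 1) with ds | ds
  · have hb := priv_balance (G := G) v s
    obtain ⟨c, hc, hcq⟩ := Finset.exists_mem_ne (by omega : 1 < (priv G v s).card) q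
    rw [mem_priv] at hc
    obtain ⟨c1, c2, c3⟩ := hc
    have c4 : c ≠ p := by rintro rfl; exact c3 hsp
    have c5 := (hv c c1 c4 hcq c2.ne').1 c2
    have c6 := (tw c c1 c4 hcq).2 c5
    exact h.two p s v q c (by grind [G.ne_of_adj]) (by grind [adjInd, G.adj_comm])
        (by grind [adjInd, G.adj_comm])
  · exact h.one p s v q (by grind [G.ne_of_adj]) (by grind [adjInd, G.adj_comm])
        (by grind [adjInd, G.adj_comm])

theorem NoRep.deg_s_of_isCloneWith (h : NoRep G) {e : ℤ} {s p q v w : V}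
    (H : HeavyTriple G e s p q) (hpq : ¬ G.Adj p q) (hv : IsCloneWith G e s p q v w)
    (hvs : ¬ G.Adj v s) :
    ideg G s = e ∧ ∀ c, c ≠ v → G.Adj q c → G.Adj s c := by
  obtain ⟨hsp, hsq, nsq, npq, tw, dp, dq, ds1, ds2⟩ := H
  obtain ⟨vs, vp, hpv, hqv, ws, wp, wq, hvw, hqw, hv, dv⟩ := hv
  have av := adjInd_of_not_adj hvs
  rcases (by omega : ideg G s = e ∨ ideg G s = e + 1) with ds | ds
  · refine ⟨ds, fun c cv hqc => ?_⟩
    by_contra hsc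
    have c1 : c ≠ s := by rintro rfl; exact hsq hqc.symm
    have c2 : c ≠ p := by rintro rfl; exact hpq hqc.symm
    have c3 : c ≠ w := by rintro rfl; exact hqw hqc
    have c5 := (hv c c1 c2 hqc.ne' cv c3).2 hqc
    have c6 := (tw c c1 c2 hqc.ne').2 hqc
    exact h.two p s v q c (by grind [G.ne_of_adj]) (by grind [adjInd, G.adj_comm])
        (by grind [adjInd, G.adj_comm])
  · exact (h.one p s v q (by grind [G.ne_of_adj]) (by grind [adjInd, G.adj_comm])
        (by grind [adjInd, G.adj_comm])).elim

theorem NoRep.block_high (h : NoRep G) {e : ℤ} {s p q u v : V}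
    (H : HeavyTriple G e s p q) (hpq : ¬ G.Adj p q) (huv : u ≠ v)
    (us : u ≠ s) (up : u ≠ p) (uq : u ≠ q) (hus : ¬ G.Adj u s) (du : ideg G u = e + 3)
    (dv : ideg G v ≤ e + 2)
    (hv : IsClone G e s p q v ∨ ∃ w, IsCloneWith G e s p q v w) : False := by
  classical
  have H' := H
  obtain ⟨hsp, hsq, nsq, npq, tw, dp, dq, ds1, ds2⟩ := H
  have hb := priv_balance (G := G) u p
  have hpu : 0 < (priv G p u).card :=
    Finset.card_pos.2 ⟨s, by simp [mem_priv, *, us.symm, hsp.symm]⟩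
  have pr : ∀ x ∈ priv G u p, x ≠ q → x ≠ s ∧ x ≠ p ∧ G.Adj u x ∧ ¬ G.Adj q x ∧ ¬ G.Adj p x :=
    fun x hx xq => by
      rw [mem_priv] at hx
      have : x ≠ s := by rintro rfl; exact hus hx.2.1
      have := tw x this hx.1 xq
      tauto
  rcases hv with hv | ⟨w, hv⟩
  · have hvs := h.not_adj_of_isClone H' hpq hv
    obtain ⟨vs, vp, hpv, hqv, hv, dv'⟩ := hv
    have := Finset.pred_card_le_card_erase (s := priv G u p) (a := q)
    obtain ⟨a, ha, b, hb, hab⟩ := Finset.one_lt_card.1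
      (by omega : 1 < ((priv G u p).erase q).card)
    rw [Finset.mem_erase] at ha hb
    have hA := pr a ha.2 ha.1
    have hB := pr b hb.2 hb.1
    exact h.two p u v a b (by grind [G.ne_of_adj]) (by grind [adjInd, G.adj_comm])
        (by grind [adjInd, G.adj_comm])
  · have hvs : ¬ G.Adj v s := fun k => by
      have := hv.deg_eq
      rw [adjInd_of_adj k] at this
      omega
    obtain ⟨vs, vp, hpv, hqv, ws, wp, wq, hvw, hqw, hv, dv'⟩ := hv
    have av := adjInd_of_not_adj hvs
    have e1 := Finset.pred_card_le_card_erase (s := priv G u p) (a := w)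
    by_cases huq : G.Adj u q
    · obtain ⟨a, ha, haq⟩ := Finset.exists_mem_ne
        (by omega : 1 < ((priv G u p).erase w).card) q
      rw [Finset.mem_erase] at ha
      have hA := pr a ha.2 haq
      exact h.two p u v q a (by grind [G.ne_of_adj]) (by grind [adjInd, G.adj_comm])
        (by grind [adjInd, G.adj_comm])
    · obtain ⟨a, ha, b, hb, hab⟩ := Finset.one_lt_card.1
        (by omega : 1 < ((priv G u p).erase w).card)
      rw [Finset.mem_erase] at ha hb
      have haq : a ≠ q := by rintro rfl; exact huq (mem_priv.1 ha.2).2.1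
      have hbq : b ≠ q := by rintro rfl; exact huq (mem_priv.1 hb.2).2.1
      have hA := pr a ha.2 haq
      have hB := pr b hb.2 hbq
      exact h.three p u v q a b (by grind [G.ne_of_adj]) (by grind [adjInd, G.adj_comm])
        (by grind [adjInd, G.adj_comm])

theorem NoRep.block_low (h : NoRep G) {e : ℤ} {s p q u v : V}
    (H : HeavyTriple G e s p q) (hpq : ¬ G.Adj p q) (huv : u ≠ v)
    (us : u ≠ s) (up : u ≠ p) (uq : u ≠ q) (hus : G.Adj u s) (du : ideg G u = e - 2)
    (dv : ideg G v ≤ e + 2)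
    (hv : IsClone G e s p q v ∨ ∃ w, IsCloneWith G e s p q v w) : False := by
  classical
  have H' := H
  obtain ⟨hsp, hsq, nsq, npq, tw, dp, dq, ds1, ds2⟩ := H
  have hb := priv_balance (G := G) q u
  have pr : ∀ x ∈ priv G q u, x ≠ s ∧ x ≠ p ∧ x ≠ u ∧ G.Adj q x ∧ ¬ G.Adj u x ∧ G.Adj p x :=
    fun x hx => by
      rw [mem_priv] at hx
      have h1 : x ≠ s := by rintro rfl; exact hsq hx.2.1.symm
      have h2 : x ≠ p := by rintro rfl; exact hpq hx.2.1.symm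
      have := tw x h1 h2 hx.2.1.ne'
      tauto
  have hpu : 0 < (priv G u q).card := Finset.card_pos.2 ⟨s, by
    simp [mem_priv, *]; exact fun k => hsq k.symm⟩
  rcases hv with hv | ⟨w, hv⟩
  · have hvs := h.not_adj_of_isClone H' hpq hv
    obtain ⟨vs, vp, hpv, hqv, hv, dv'⟩ := hv
    by_cases hqu : G.Adj q u
    · obtain ⟨a, b, c, ha, hb, hc, hab, hac, hbc⟩ := Finset.two_lt_card_iff.1
        (by omega : 2 < (priv G q u).card)
      have hA := pr a ha
      have hB := pr b hb
      have hC := pr c hc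
      have huv : G.Adj v u := (hv u us up uq huv).2 hqu
      have hpu : G.Adj p u := (tw u us up uq).2 hqu
      have av : a ≠ v := by rintro rfl; exact hA.2.2.2.2.1 huv.symm
      have bv : b ≠ v := by rintro rfl; exact hB.2.2.2.2.1 huv.symm
      have cv : c ≠ v := by rintro rfl; exact hC.2.2.2.2.1 huv.symm
      exact h.three p u v a b c (by grind [G.ne_of_adj]) (by grind [adjInd, G.adj_comm])
        (by grind [adjInd, G.adj_comm])
    · have e1 := Finset.pred_card_le_card_erase (s := priv G q u) (a := v)
      obtain ⟨a, ha, b, hb, hab⟩ := Finset.one_lt_card.1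
        (by omega : 1 < ((priv G q u).erase v).card)
      rw [Finset.mem_erase] at ha hb
      have hA := pr a ha.2
      have hB := pr b hb.2
      have hpu : ¬ G.Adj p u := by rwa [tw u us up uq]
      exact h.three q u v p a b (by grind [G.ne_of_adj]) (by grind [adjInd, G.adj_comm])
        (by grind [adjInd, G.adj_comm])
  · have hvs : ¬ G.Adj v s := fun k => by
      have := hv.deg_eq
      rw [adjInd_of_adj k] at this
      omega
    obtain ⟨ds, hs⟩ := h.deg_s_of_isCloneWith H' hpq hv hvs
    obtain ⟨vs, vp, hpv, hqv, ws, wp, wq, hvw, hqw, hv, dv'⟩ := hv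
    have hqu : G.Adj q u := by
      by_contra hqu
      have hb' := priv_balance (G := G) q s
      have c1 : 1 < (priv G s q).card := Finset.one_lt_card.2
        ⟨u, by simp [mem_priv, *, hus.symm], p, by simp [mem_priv, *]; exact fun k => hpq k.symm, up⟩
      have c2 : priv G q s ⊆ {v} := fun x hx => by
        rw [mem_priv] at hx
        by_contra hxv
        exact hx.2.2 (hs x (by simpa using hxv) hx.2.1)
      have c3 := Finset.card_le_card c2
      rw [Finset.card_singleton] at c3
      omega
    have huw : u ≠ w := by rintro rfl; exact hqw hqu
    have huv' : G.Adj v u := (hv u us up uq huv huw).2 hqu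
    obtain ⟨a, ha, b, hb, hab⟩ := Finset.one_lt_card.1 (by omega : 1 < (priv G q u).card)
    have hA := pr a ha
    have hB := pr b hb
    have av : a ≠ v := by rintro rfl; exact hA.2.2.2.2.1 huv'.symm
    have bv : b ≠ v := by rintro rfl; exact hB.2.2.2.2.1 huv'.symm
    have sa := hs a av hA.2.2.2.1
    have sb := hs b bv hB.2.2.2.1
    exact h.two q u s a b (by grind [G.ne_of_adj]) (by grind [adjInd, G.adj_comm])
        (by grind [adjInd, G.adj_comm])

theorem NoRep.block_of_not_adj (h : NoRep G) {e : ℤ} {s p q u v : V}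
    (H : HeavyTriple G e s p q) (hpq : ¬ G.Adj p q) (huv : u ≠ v)
    (us : u ≠ s) (up : u ≠ p) (uq : u ≠ q) (vs : v ≠ s) (vp : v ≠ p) (vq : v ≠ q)
    (hu1 : e - 2 ≤ ideg G u) (hu2 : ideg G u ≤ e + 3)
    (hv1 : e - 1 ≤ ideg G v) (hv2 : ideg G v ≤ e + 2) : False := by
  have av := adjInd_eq_zero_or_one G v s
  have au := adjInd_eq_zero_or_one G u s
  have hv := H.isClone_or h hpq vs vp vq (by omega) (by omega)
  by_cases hu : e - 2 ≤ ideg G u - adjInd G u s ∧ ideg G u - adjInd G u s ≤ e + 2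
  · rcases H.isClone_or h hpq us up uq hu.1 hu.2 with hu | ⟨x, hu⟩ <;> rcases hv with hv | ⟨w, hv⟩
    · exact h.not_clone_clone H hpq huv hu hv
    · exact h.not_clone_cloneWith H hpq huv hu hv
    · exact h.not_clone_cloneWith H hpq huv.symm hv hu
    · exact h.not_cloneWith_cloneWith H hpq huv hu hv
  · by_cases hus : G.Adj u s
    · rw [adjInd_of_adj hus] at hu
      exact h.block_low H hpq huv us up uq hus (by omega) hv2 hv
    · rw [adjInd_of_not_adj hus] at hu
      exact h.block_high H hpq huv us up uq hus (by omega) hv2 hv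

theorem NoRep.block (h : NoRep G) {e : ℤ} {s p q u v : V}
    (H : HeavyTriple G e s p q) (huv : u ≠ v)
    (us : u ≠ s) (up : u ≠ p) (uq : u ≠ q) (vs : v ≠ s) (vp : v ≠ p) (vq : v ≠ q)
    (hu1 : e - 2 ≤ ideg G u) (hu2 : ideg G u ≤ e + 3)
    (hv1 : e - 1 ≤ ideg G v) (hv2 : ideg G v ≤ e + 2) : False := by
  by_cases hpq : G.Adj p q
  · exact h.compl.block_of_not_adj H.compl (by simp [hpq.symm]) huv us uq up vs vq vp
      (by rw [ideg_compl]; linarith) (by rw [ideg_compl]; linarith) (by rw [ideg_compl]; linarith)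
      (by rw [ideg_compl]; linarith)
  · exact h.block_of_not_adj H hpq huv us up uq vs vp vq hu1 hu2 hv1 hv2
end

theorem sum_consecutive_le {f : ℤ → ℤ} (mono : ∀ k, f (k - 1) ≤ f k)
    (step : ∀ k, f k ≤ f (k - 1) + 2) (zero : ∀ k ≤ 0, f k = 0)
    (block : ∀ e, 3 ≤ f (e + 1) - f (e - 1) → f (e + 2) - f (e - 2) = 3 ∨
      f (e + 2) - f (e - 2) = 4 ∧ f (e + 3) - f (e - 3) = 4) (N : ℕ) (k : ℤ) (hk : -1 ≤ k)
    (hN : k < N) (h0 : f (k + 1) - f (k - 1) ≤ 2)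
    (h1 : ¬ (3 ≤ f k - f (k - 2) ∧ f (k + 1) - f (k - 3) = 4 ∧ f (k + 2) - f (k - 4) = 4)) :
    f k + f (k + 1) ≤ 2 * k + 2 := by
  induction N using Nat.strong_induction_on generalizing k with
  | _ N ih =>
  by_cases hb : k = -1
  · subst hb
    rw [zero (-1) (by omega), zero (-1 + 1) (by omega)]; omega
  have rec1 := fun j (hj : j < k) (hj1 : -1 ≤ j) => ih (j + 1).toNat (by omega) j hj1 (by omega)
  have pos : ∀ j, 3 ≤ f (j + 1) - f (j - 1) → 1 ≤ j := fun j hj => by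
    by_contra hlt
    have := step (j + 1)
    have := zero j (by omega)
    have := zero (j - 1) (by omega)
    rw [add_sub_cancel_right] at *
    omega
  have gap : ∀ j, 3 ≤ f (j + 1) - f (j - 1) →
      ¬ (f (j - 1) - f (j - 5) = 4 ∧ f j - f (j - 6) = 4) := fun j hj hh => by
    have := step (j + 1)
    have := mono (j - 5)
    rw [add_sub_cancel_right, sub_sub] at *
    norm_num at *
    omega
  have s1 := mono (k + 2)
  have s2 := mono (k + 1)
  have s3 := mono k
  have s4 := mono (k - 1)
  have s5 := mono (k - 2)
  have s6 := mono (k - 3)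
  have s7 := mono (k - 4)
  have t1 := step (k + 2)
  have t2 := step (k + 1)
  have t3 := step k
  have t4 := step (k - 1)
  have t5 := step (k - 2)
  have t6 := step (k - 3)
  have t7 := step (k - 4)
  have b1 := block (k - 1)
  have b2 := block (k - 2)
  have p1 := pos (k - 1)
  have p2 := pos (k - 2)
  have g1 := gap (k - 1)
  have g2 := gap (k - 2)
  have r1 := rec1 (k - 1) (by omega) (by omega)
  have r3 := rec1 (k - 3) (by omega)
  have r4 := rec1 (k - 4) (by omega)
  clear ih rec1 pos gap mono step zero block
  simp only [show k + 2 - 1 = k + 1 by ring, show k + 1 - 1 = k by ring, show k - 1 - 1 = k - 2 by ring,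
    show k - 2 - 1 = k - 3 by ring, show k - 3 - 1 = k - 4 by ring, show k - 4 - 1 = k - 5 by ring,
    show k - 1 + 1 = k by ring, show k - 2 + 1 = k - 1 by ring, show k - 3 + 1 = k - 2 by ring,
    show k - 4 + 1 = k - 3 by ring, show k - 1 + 2 = k + 1 by ring, show k - 2 + 2 = k by ring,
    show k - 3 + 2 = k - 1 by ring, show k - 4 + 2 = k - 2 by ring, show k - 1 + 3 = k + 2 by ring,
    show k - 2 + 3 = k + 1 by ring, show k - 1 - 2 = k - 3 by ring, show k - 2 - 2 = k - 4 by ring,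
    show k - 3 - 2 = k - 5 by ring, show k - 4 - 2 = k - 6 by ring, show k - 1 - 3 = k - 4 by ring,
    show k - 2 - 3 = k - 5 by ring, show k - 3 - 3 = k - 6 by ring, show k - 4 - 3 = k - 7 by ring,
    show k - 1 - 4 = k - 5 by ring, show k - 3 - 4 = k - 7 by ring, show k - 4 - 4 = k - 8 by ring,
    show k - 1 - 5 = k - 6 by ring, show k - 2 - 5 = k - 7 by ring, show k - 1 - 6 = k - 7 by ring,
    show k - 2 - 6 = k - 8 by ring] at *
  by_cases H1 : 3 ≤ f k - f (k - 2)
  · rcases b1 H1 with B | B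
    · have := r3 (by have := p1 H1; omega) (by omega) (by have := g1 H1; omega)
      omega
    · omega
  · by_cases H2 : 3 ≤ f (k - 1) - f (k - 3)
    · rcases b2 H2 with B | B
      · have := r1 (by omega) (by omega)
        omega
      · have := r4 (by have := p2 H2; omega) (by omega) (by have := g2 H2; omega)
        omega
    · have := r1 (by omega) (by omega)
      omega

section
variable {V : Type*} [Fintype V] {G : SimpleGraph V}

/-- The number of vertices of degree at most `k`. -/
noncomputable def numDegLE (G : SimpleGraph V) (k : ℤ) : ℤ :=
  ((Finset.univ.filter fun v => ideg G v ≤ k).card : ℤ)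

theorem numDegLE_sub (G : SimpleGraph V) {a b : ℤ} (hab : a ≤ b) :
    numDegLE G b - numDegLE G a
      = ((Finset.univ.filter fun v => a < ideg G v ∧ ideg G v ≤ b).card : ℤ) := by
  classical
  have h := Finset.card_filter_add_card_filter_not
    (s := Finset.univ.filter fun v => ideg G v ≤ b) (fun v => ideg G v ≤ a)
  rw [Finset.filter_filter, Finset.filter_filter] at h
  have h1 : (Finset.univ.filter fun v => ideg G v ≤ b ∧ ideg G v ≤ a)
      = Finset.univ.filter fun v => ideg G v ≤ a := Finset.filter_congr fun v _ => by omega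
  have h2 : (Finset.univ.filter fun v => ideg G v ≤ b ∧ ¬ ideg G v ≤ a)
      = Finset.univ.filter fun v => a < ideg G v ∧ ideg G v ≤ b :=
    Finset.filter_congr fun v _ => by omega
  rw [h1, h2] at h
  unfold numDegLE
  omega

theorem NoRep.numDegLE_le (h : NoRep G) (k : ℤ) : numDegLE G k ≤ numDegLE G (k - 1) + 2 := by
  have e := numDegLE_sub G (by omega : k - 1 ≤ k)
  by_contra hc
  obtain ⟨x, hx, y, hy, z, hz, n1, n2, n3⟩ := Finset.two_lt_card.1
    (by omega : 2 < (Finset.univ.filter fun v => k - 1 < ideg G v ∧ ideg G v ≤ k).card)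
  simp at hx hy hz
  exact h.zero (x := x) (y := y) (z := z) (by simp [*]) (by omega) (by omega)

theorem NoRep.exists_heavyTriple_of_numDegLE (h : NoRep G) {e : ℤ}
    (he : 3 ≤ numDegLE G (e + 1) - numDegLE G (e - 1)) : ∃ s p q, HeavyTriple G e s p q := by
  rw [numDegLE_sub G (by omega)] at he
  obtain ⟨x, hx, y, hy, z, hz, n1, n2, n3⟩ := Finset.two_lt_card.1
    (by omega : 2 < (Finset.univ.filter fun v => e - 1 < ideg G v ∧ ideg G v ≤ e + 1).card)
  simp at hx hy hz
  exact h.exists_heavyTriple (x := x) (y := y) (z := z) (by simp [*]) (by omega) (by omega)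
    (by omega)

theorem NoRep.numDegLE_block (h : NoRep G) {e : ℤ}
    (he : 3 ≤ numDegLE G (e + 1) - numDegLE G (e - 1)) :
    numDegLE G (e + 2) - numDegLE G (e - 2) = 3 ∨
      numDegLE G (e + 2) - numDegLE G (e - 2) = 4 ∧
      numDegLE G (e + 3) - numDegLE G (e - 3) = 4 := by
  classical
  obtain ⟨s, p, q, H⟩ := h.exists_heavyTriple_of_numDegLE he
  have n1 := H.adj.ne
  have n2 := H.ne_sq
  have n3 := H.ne_pq
  have dp := H.deg_p
  have dq := H.deg_q
  have ds := H.le_deg_s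
  have ds' := H.deg_s_le
  rw [numDegLE_sub G (by omega), numDegLE_sub G (by omega)]
  set T : Finset V := {s, p, q} with hT
  have cT : T.card = 3 := Finset.card_eq_three.2 ⟨s, p, q, n1, n2, n3, rfl⟩
  set A := Finset.univ.filter fun v => e - 2 < ideg G v ∧ ideg G v ≤ e + 2 with hA
  set B := Finset.univ.filter fun v => e - 3 < ideg G v ∧ ideg G v ≤ e + 3 with hB
  have hTA : T ⊆ A := fun v hv => by
    simp [hT] at hv
    simp [hA]
    rcases hv with rfl | rfl | rfl <;> omega
  have hAB : A ⊆ B := fun v hv => by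
    simp [hA] at hv
    simp [hB]
    omega
  by_cases hAT : A ⊆ T
  · left
    rw [hTA.antisymm hAT] at cT
    exact_mod_cast cT
  · right
    obtain ⟨v, hvA, hvT⟩ := Finset.not_subset.1 hAT
    have hBT : B ⊆ insert v T := fun u hu => by
      by_contra huv
      simp [hT] at huv hvT
      simp [hB] at hu
      simp [hA] at hvA
      exact h.block H (u := u) (v := v) (by tauto) (by tauto) (by tauto) (by tauto) (by tauto)
        (by tauto) (by tauto) (by omega) (by omega) (by omega) (by omega)
    have c1 := Finset.card_le_card hBT
    have c2 := Finset.card_le_card (Finset.insert_subset hvA hTA)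
    have c3 := Finset.card_le_card hAB
    rw [Finset.card_insert_of_notMem hvT] at c1 c2
    omega

theorem NoRep.exists_heavyTriple_top (h : NoRep G) (hn : 1 ≤ Fintype.card V)
    (h1 : ∀ v, 1 ≤ ideg G v)
    (h2 : ∀ v, ideg G v ≤ Fintype.card V - 2) :
    ∃ s p q, HeavyTriple G (Fintype.card V - 3) s p q := by
  refine h.exists_heavyTriple_of_numDegLE ?_
  have full : ∀ k, (Fintype.card V : ℤ) - 2 ≤ k → numDegLE G k = Fintype.card V := fun k hk => by
    unfold numDegLE
    rw [Finset.filter_true_of_mem fun v _ => (h2 v).trans hk, Finset.card_univ]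
  have zero : ∀ k ≤ 0, numDegLE G k = 0 := fun k hk => by
    unfold numDegLE
    rw [Finset.filter_false_of_mem fun v _ => by have := h1 v; omega, Finset.card_empty]; simp
  have mono : ∀ k, numDegLE G (k - 1) ≤ numDegLE G k := fun k => by
    have := numDegLE_sub G (by omega : k - 1 ≤ k)
    omega
  by_contra hc
  have key := sum_consecutive_le mono h.numDegLE_le zero (fun e => h.numDegLE_block)
    (Fintype.card V) (Fintype.card V - 2) (by omega) (by omega)
  have st := h.numDegLE_le (Fintype.card V - 2)
  have f1 := full (Fintype.card V - 2) (by omega)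
  have f2 := full (Fintype.card V - 2 + 1) (by omega)
  ring_nf at *
  have := key (by omega) (by omega)
  omega

theorem degIn_le_ideg (G : SimpleGraph V) (D : Finset V) (v : V) : degIn G D v ≤ ideg G v := by
  classical
  unfold ideg degIn
  exact_mod_cast Finset.card_le_card (Finset.filter_subset_filter _ (Finset.subset_univ D))

theorem adjInd_sum_three_le (G : SimpleGraph V) {a b c : V} (hd : [a, b, c].Nodup)
    (v : V) : adjInd G v a + adjInd G v b + adjInd G v c ≤ ideg G v := by
  classical
  simp at hd
  have := degIn_le_ideg G {a, b, c} v
  rw [degIn_insert (by grind), degIn_insert (by grind), ← insert_empty_eq, degIn_insert (by simp),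
    degIn_empty] at this
  linarith

theorem adjInd_sum_four_le (G : SimpleGraph V) {a b c d : V} (hd : [a, b, c, d].Nodup)
    (v : V) : adjInd G v a + adjInd G v b + adjInd G v c + adjInd G v d ≤ ideg G v := by
  classical
  simp at hd
  have := degIn_le_ideg G {a, b, c, d} v
  rw [degIn_insert (by grind), degIn_insert (by grind), degIn_insert (by grind), ← insert_empty_eq,
    degIn_insert (by simp), degIn_empty] at this
  linarith

theorem HeavyTriple.adjInd_sum_le {s p q a b c : V} (H : HeavyTriple G 1 s p q)
    (hd : [a, b, c].Nodup) (ha : 3 ≤ ideg G a) (hb : 3 ≤ ideg G b) (hc : 3 ≤ ideg G c) :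
    adjInd G s a + adjInd G s b + adjInd G s c + (adjInd G p a + adjInd G p b + adjInd G p c)
      + (adjInd G q a + adjInd G q b + adjInd G q c) ≤ 3 := by
  have dp := H.deg_p
  have dq := H.deg_q
  have ds' := H.deg_s_le
  have n : ∀ x, ideg G x ≤ 2 → x ≠ a ∧ x ≠ b ∧ x ≠ c := fun x hx =>
    ⟨by rintro rfl; omega, by rintro rfl; omega, by rintro rfl; omega⟩
  have np := n p (by omega)
  have ns := n s (by omega)
  have h1 := adjInd_sum_four_le G (a := p) (b := a) (c := b) (d := c) (by grind) s
  have h2 := adjInd_sum_four_le G (a := s) (b := a) (c := b) (d := c) (by grind) p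
  have h3 := adjInd_sum_three_le G hd q
  rw [adjInd_of_adj H.adj] at h1
  rw [adjInd_of_adj H.adj.symm] at h2
  omega

theorem HeavyTriple.not_bottom_top {s p q s' p' q' : V} (hn : 6 ≤ Fintype.card V)
    (H : HeavyTriple G 1 s p q) (H' : HeavyTriple Gᶜ 1 s' p' q') : False := by
  have dp := H.deg_p
  have dq := H.deg_q
  have ds := H.deg_s_le
  have dp' := H'.deg_p
  have dq' := H'.deg_q
  have ds' := H'.deg_s_le
  have n1 := H.adj.ne
  have n2 := H.ne_sq
  have n3 := H.ne_pq
  have n1' := H'.adj.ne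
  have n2' := H'.ne_sq
  have n3' := H'.ne_pq
  have c := fun v => ideg_compl G v
  have cs := c s
  have cp := c p
  have cq := c q
  have cs' := c s'
  have cp' := c p'
  have cq' := c q'
  have a1 := H.adjInd_sum_le (a := s') (b := p') (c := q') (by simp [*]) (by omega) (by omega)
    (by omega)
  have a2 := H'.adjInd_sum_le (a := s) (b := p) (c := q) (by simp [*]) (by omega) (by omega)
    (by omega)
  have e : ∀ x y, ideg G x ≤ 2 → 3 ≤ ideg G y → adjInd Gᶜ y x = 1 - adjInd G x y :=
    fun x y hx hy => by
      rw [adjInd_compl G (by rintro rfl; omega), adjInd_comm]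
  rw [e s s' (by omega) (by omega), e s p' (by omega) (by omega), e s q' (by omega) (by omega),
    e p s' (by omega) (by omega), e p p' (by omega) (by omega), e p q' (by omega) (by omega),
    e q s' (by omega) (by omega), e q p' (by omega) (by omega), e q q' (by omega) (by omega)] at a2
  omega

end

theorem not_noRep_of_card_eq (n : ℕ) (hn : 5 ≤ n) {V : Type*} [Fintype V]
    (hV : Fintype.card V = n) (G : SimpleGraph V) : ¬ NoRep G := by
  classical
  induction n, hn using Nat.le_induction generalizing V with
  | base => exact not_noRep_of_card_eq_five hV
  | succ n hn ih =>
    intro h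
    have isolated : ∀ H : SimpleGraph V, NoRep H → ∀ v, 1 ≤ ideg H v := fun H hH v => by
      by_contra hv
      have h0 := ideg_nonneg H v
      refine ih (V := ({v}ᶜ : Set V)) ?_ _ (hH.induce_of_isolated (i := v) (by omega))
      rw [Fintype.card_compl_set, hV]; simp
    have l := isolated G h
    have l' := isolated Gᶜ h.compl
    have c := fun v => ideg_compl G v
    obtain ⟨s, p, q, H⟩ := h.exists_heavyTriple_top (by omega) l
      (fun v => by have := l' v; have := c v; omega)
    obtain ⟨s', p', q', H'⟩ := h.compl.exists_heavyTriple_top (by omega) l'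
      (fun v => by have := l v; have := c v; omega)
    have K := H.compl
    have K' := H'.compl
    rw [compl_compl] at K'
    have one : (Fintype.card V : ℤ) - 2 - (Fintype.card V - 3) = 1 := by ring
    rw [one] at K K'
    exact K'.not_bottom_top (by omega) K

theorem delDeg_eq {V : Type*} [Fintype V] (G : SimpleGraph V) (D : Finset V) (v : V) :
    (delDeg G D v : ℤ) = ideg G v - degIn G D v := by
  classical
  have h := ideg_sub_degIn_compl G v Dᶜ
  rw [compl_compl] at h
  rw [h]
  unfold delDeg degIn
  rw [Nat.card_eq_fintype_card, ← Set.toFinset_card]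
  congr 2
  ext w
  simp [and_comm]

/-- For every graph `G` with at least 5 vertices, one can delete at most 3 vertices so that
the resulting induced subgraph contains three distinct vertices of equal degree. -/
theorem stmt_0 {V : Type*} [Fintype V] (G : SimpleGraph V) (h5 : 5 ≤ Fintype.card V) :
    ∃ D : Finset V, D.card ≤ 3 ∧ ∃ x y z : V, x ∉ D ∧ y ∉ D ∧ z ∉ D ∧
      x ≠ y ∧ x ≠ z ∧ y ≠ z ∧
      delDeg G D x = delDeg G D y ∧ delDeg G D y = delDeg G D z := by
  by_contra hD
  refine not_noRep_of_card_eq _ h5 rfl G fun D hc x y z hx hy hz hxy hxz hyz h1 h2 => ?_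
  rw [← delDeg_eq, ← delDeg_eq] at h1 h2
  exact hD ⟨D, hc, x, y, z, hx, hy, hz, hxy, hxz, hyz, by exact_mod_cast h1, by exact_mod_cast h2⟩
end

section
/- Let G be a graph, d ≥ 1 an integer, and U = {v1, v2, v3, v4} ⊆ V(G) with d(v1) = d(v2) = d and d(v3) = d(v4) = d + 2. If some 3-element subset of U is balanceable, then one can delete at most 3 vertices from G such that the resulting induced subgraph has at least three vertices with the same degree. -/
/-- `{x,y,z}` with `deg x ≤ deg y ≤ deg z` is balanceable: (C1)-(C4). -/
def Balanceable {V : Type*} (G : SimpleGraph V) (x y z : V) : Prop :=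
  (¬G.Adj x y ∧ ¬G.Adj x z ∧ ¬G.Adj y z) ∨
  (G.Adj x y ∧ G.Adj x z ∧ G.Adj y z) ∨
  (G.Adj x y ∧ ¬G.Adj x z ∧ ¬G.Adj y z) ∨
  (G.Adj x y ∧ G.Adj x z ∧ ¬G.Adj y z)

/-- `{x,y,z}` with `deg x ≤ deg y ≤ deg z` is accessible: (C5)-(C8). -/
def Accessible {V : Type*} (G : SimpleGraph V) (x y z : V) : Prop :=
  (¬G.Adj x y ∧ G.Adj x z ∧ ¬G.Adj y z ∧
    (G.neighborSet y \ G.neighborSet z).Nonempty) ∨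
  (G.Adj x y ∧ ¬G.Adj x z ∧ G.Adj y z ∧
    (G.neighborSet x \ insert y (G.neighborSet y)).Nonempty) ∨
  (¬G.Adj x y ∧ ¬G.Adj x z ∧ G.Adj y z ∧
    (G.neighborSet x \ G.neighborSet y).Nonempty ∧
    (G.neighborSet x \ G.neighborSet z).Nonempty) ∨
  (¬G.Adj x y ∧ G.Adj x z ∧ G.Adj y z ∧
    (G.neighborSet x \ insert z (G.neighborSet z)).Nonempty ∧
    (G.neighborSet y \ insert z (G.neighborSet z)).Nonempty)

/-- Feasible = balanceable or accessible. -/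
def Feasible {V : Type*} (G : SimpleGraph V) (x y z : V) : Prop :=
  Balanceable G x y z ∨ Accessible G x y z

lemma deg_eq_card_neighborFinset {V : Type*} [Fintype V] [DecidableEq V] (G : SimpleGraph V)
    [DecidableRel G.Adj] (v : V) : deg G v = (G.neighborFinset v).card := by
  rw [deg, Nat.card_eq_fintype_card, SimpleGraph.card_neighborSet_eq_degree]; rfl

open Finset in
lemma delDeg_add_card_filter {V : Type*} [Fintype V] [DecidableEq V] (G : SimpleGraph V)
    [DecidableRel G.Adj] (D : Finset V) (v : V) :
    delDeg G D v + (D.filter (G.Adj v)).card = deg G v := by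
  have h1 : delDeg G D v = (G.neighborFinset v \ D).card := by
    rw [delDeg, Nat.card_eq_card_toFinset]
    congr 1
    ext u
    simp
  have h3 : D.filter (G.Adj v) = G.neighborFinset v ∩ D := by
    ext u; simp [and_comm]
  rw [h1, deg_eq_card_neighborFinset, h3, add_comm, card_inter_add_card_sdiff]

lemma Balanceable.adj_or_not_adj {V : Type*} {G : SimpleGraph V} {x y z : V}
    (h : Balanceable G x y z) : G.Adj x y ∨ ¬G.Adj z x ∧ ¬G.Adj z y := by
  rw [G.adj_comm z x, G.adj_comm z y]
  unfold Balanceable at h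
  tauto

lemma Balanceable.not_adj_or_adj {V : Type*} {G : SimpleGraph V} {x y z : V}
    (h : Balanceable G x y z) : ¬G.Adj y z ∨ G.Adj x y ∧ G.Adj x z := by
  unfold Balanceable at h
  tauto

/-- Deleting at most three vertices leaves three vertices of equal degree. -/
def Equalizable {V : Type*} (G : SimpleGraph V) : Prop :=
  ∃ D : Finset V, D.card ≤ 3 ∧ ∃ x y z : V, x ∉ D ∧ y ∉ D ∧ z ∉ D ∧
    x ≠ y ∧ x ≠ z ∧ y ≠ z ∧ delDeg G D x = delDeg G D y ∧ delDeg G D y = delDeg G D z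

section

variable {V : Type*} [Fintype V] {G : SimpleGraph V}

open Classical in
lemma delDeg_compl (D : Finset V) {v : V} (hv : v ∉ D) :
    delDeg Gᶜ D v + delDeg G D v + 1 + D.card = Fintype.card V := by
  have h1 := delDeg_add_card_filter G D v
  have h2 := delDeg_add_card_filter Gᶜ D v
  have h3 : (D.filter (G.Adj v)).card + (D.filter (Gᶜ.Adj v)).card = D.card := by
    rw [← Finset.card_filter_add_card_filter_not (s := D) (G.Adj v)]
    congr 2
    ext u
    simp only [Finset.mem_filter, SimpleGraph.compl_adj, and_congr_right_iff, and_iff_right_iff_imp]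
    rintro hu - rfl
    exact hv hu
  have h4 := G.degree_compl v
  have h5 := G.degree_lt_card_verts v
  rw [deg_eq_card_neighborFinset, SimpleGraph.card_neighborFinset_eq_degree] at h1 h2
  omega

lemma deg_compl (v : V) : deg Gᶜ v + deg G v + 1 = Fintype.card V := by
  have := delDeg_compl (G := G) ∅ (v := v) (by simp)
  simpa [delDeg, deg] using this

lemma Equalizable.of_compl (h : Equalizable Gᶜ) : Equalizable G := by
  obtain ⟨D, hD, x, y, z, hx, hy, hz, hxy, hxz, hyz, h1, h2⟩ := h
  have ex := delDeg_compl (G := G) D hx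
  have ey := delDeg_compl (G := G) D hy
  have ez := delDeg_compl (G := G) D hz
  exact ⟨D, hD, x, y, z, hx, hy, hz, hxy, hxz, hyz, by omega, by omega⟩

open Classical in
lemma exists_adj_not_adj {a c : V} (h : deg G a + 2 ≤ deg G c) (w : V) :
    ∃ u, G.Adj c u ∧ ¬G.Adj a u ∧ u ≠ w ∧ u ≠ a := by
  by_contra! hcon
  simp only [deg_eq_card_neighborFinset] at h
  by_cases hac : G.Adj a c
  · have hs : G.neighborFinset c ⊆ (G.neighborFinset a).erase c ∪ {w, a} := by
      intro u hu
      have := hcon u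
      have := G.ne_of_adj (by simpa using hu : G.Adj c u)
      simp at hu ⊢
      grind
    have h1 := (Finset.card_le_card hs).trans (Finset.card_union_le _ _)
    have h2 := Finset.card_le_two (a := w) (b := a)
    have h3 := Finset.card_erase_add_one ((G.mem_neighborFinset a c).2 hac)
    omega
  · have hs : G.neighborFinset c ⊆ G.neighborFinset a ∪ {w} := by
      intro u hu
      have := hcon u
      simp at hu ⊢
      grind [SimpleGraph.adj_comm]
    have h1 := (Finset.card_le_card hs).trans (Finset.card_union_le _ _)
    simp at h1 h
    omega

variable {a b c w u₁ u₂ : V}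

open Classical in
lemma equalizable_of_pair (hab : a ≠ b) (hac : a ≠ c) (hbc : b ≠ c)
    (hdb : deg G b = deg G a) (hdc : deg G c = deg G a + 2)
    (hw : w ≠ a ∧ w ≠ b) (hu : u₁ ≠ a ∧ u₁ ≠ b) (hwu : w ≠ u₁)
    (hwc : G.Adj c w ∧ ¬G.Adj a w ∧ ¬G.Adj b w)
    (huc : G.Adj c u₁ ∧ ¬G.Adj a u₁ ∧ ¬G.Adj b u₁) : Equalizable G := by
  have ea := delDeg_add_card_filter G {w, u₁} a
  have eb := delDeg_add_card_filter G {w, u₁} b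
  have ec := delDeg_add_card_filter G {w, u₁} c
  simp [Finset.filter_insert, Finset.filter_singleton, hwc, huc, hwu] at ea eb ec
  have := G.ne_of_adj hwc.1
  have := G.ne_of_adj huc.1
  refine ⟨{w, u₁}, by have := Finset.card_le_two (a := w) (b := u₁); omega,
    a, b, c, ?_, ?_, ?_, hab, hac, hbc, by omega, by omega⟩ <;> simp <;> grind

open Classical in
lemma equalizable_of_pair' (hab : a ≠ b) (hac : a ≠ c) (hbc : b ≠ c)
    (hdb : deg G b = deg G a + 2) (hdc : deg G c = deg G a + 2)
    (hw : w ≠ a) (hu : u₁ ≠ a) (hwu : w ≠ u₁)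
    (hwc : G.Adj b w ∧ G.Adj c w ∧ ¬G.Adj a w)
    (huc : G.Adj b u₁ ∧ G.Adj c u₁ ∧ ¬G.Adj a u₁) : Equalizable G := by
  have ea := delDeg_add_card_filter G {w, u₁} a
  have eb := delDeg_add_card_filter G {w, u₁} b
  have ec := delDeg_add_card_filter G {w, u₁} c
  simp [Finset.filter_insert, Finset.filter_singleton, hwc, huc, hwu] at ea eb ec
  have := G.ne_of_adj hwc.1
  have := G.ne_of_adj huc.1
  have := G.ne_of_adj hwc.2.1
  have := G.ne_of_adj huc.2.1
  refine ⟨{w, u₁}, by have := Finset.card_le_two (a := w) (b := u₁); omega,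
    a, b, c, ?_, ?_, ?_, hab, hac, hbc, by omega, by omega⟩ <;> simp <;> grind

open Classical in
lemma equalizable_of_triple (hab : a ≠ b) (hac : a ≠ c) (hbc : b ≠ c)
    (hdb : deg G b = deg G a) (hdc : deg G c = deg G a + 2)
    (hw : w ≠ a ∧ w ≠ b) (hu₁ : u₁ ≠ a ∧ u₁ ≠ b ∧ u₁ ≠ w) (hu₂ : u₂ ≠ a ∧ u₂ ≠ b ∧ u₂ ≠ w)
    (hwc : G.Adj c w ∧ ¬G.Adj a w ∧ ¬G.Adj b w)
    (h₁ : G.Adj c u₁ ∧ ¬G.Adj a u₁) (h₂ : G.Adj c u₂ ∧ ¬G.Adj b u₂) : Equalizable G := by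
  by_cases h₁b : G.Adj b u₁
  swap
  · exact equalizable_of_pair hab hac hbc hdb hdc hw ⟨hu₁.1, hu₁.2.1⟩ hu₁.2.2.symm hwc
      ⟨h₁.1, h₁.2, h₁b⟩
  by_cases h₂a : G.Adj a u₂
  swap
  · exact equalizable_of_pair hab hac hbc hdb hdc hw ⟨hu₂.1, hu₂.2.1⟩ hu₂.2.2.symm hwc
      ⟨h₂.1, h₂a, h₂.2⟩
  have h₁₂ : u₁ ≠ u₂ := by rintro rfl; exact h₁.2 h₂a
  have ea := delDeg_add_card_filter G {w, u₁, u₂} a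
  have eb := delDeg_add_card_filter G {w, u₁, u₂} b
  have ec := delDeg_add_card_filter G {w, u₁, u₂} c
  simp [Finset.filter_insert, Finset.filter_singleton, hwc, h₁, h₂, h₁b, h₂a, h₁₂,
    hu₁.2.2.symm, hu₂.2.2.symm] at ea eb ec
  have := G.ne_of_adj hwc.1
  have := G.ne_of_adj h₁.1
  have := G.ne_of_adj h₂.1
  refine ⟨{w, u₁, u₂}, Finset.card_le_three,
    a, b, c, ?_, ?_, ?_, hab, hac, hbc, by omega, by omega⟩ <;> simp <;> grind

open Classical in
lemma equalizable_of_triple' (hab : a ≠ b) (hac : a ≠ c) (hbc : b ≠ c)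
    (hdb : deg G b = deg G a + 2) (hdc : deg G c = deg G a + 2)
    (hw : w ≠ a) (hu₁ : u₁ ≠ a ∧ u₁ ≠ c ∧ u₁ ≠ w) (hu₂ : u₂ ≠ a ∧ u₂ ≠ b ∧ u₂ ≠ w)
    (hwc : G.Adj b w ∧ G.Adj c w ∧ ¬G.Adj a w)
    (h₁ : G.Adj b u₁ ∧ ¬G.Adj a u₁) (h₂ : G.Adj c u₂ ∧ ¬G.Adj a u₂) : Equalizable G := by
  by_cases h₁c : G.Adj c u₁
  · exact equalizable_of_pair' hab hac hbc hdb hdc hw hu₁.1 hu₁.2.2.symm hwc ⟨h₁.1, h₁c, h₁.2⟩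
  by_cases h₂b : G.Adj b u₂
  · exact equalizable_of_pair' hab hac hbc hdb hdc hw hu₂.1 hu₂.2.2.symm hwc ⟨h₂b, h₂.1, h₂.2⟩
  have h₁₂ : u₁ ≠ u₂ := by rintro rfl; exact h₁c h₂.1
  have ea := delDeg_add_card_filter G {w, u₁, u₂} a
  have eb := delDeg_add_card_filter G {w, u₁, u₂} b
  have ec := delDeg_add_card_filter G {w, u₁, u₂} c
  simp [Finset.filter_insert, Finset.filter_singleton, hwc, h₁, h₂, h₁c, h₂b,
    hu₁.2.2.symm, hu₂.2.2.symm] at ea eb ec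
  have := G.ne_of_adj hwc.1
  have := G.ne_of_adj hwc.2.1
  have := G.ne_of_adj h₁.1
  have := G.ne_of_adj h₂.1
  refine ⟨{w, u₁, u₂}, Finset.card_le_three,
    a, b, c, ?_, ?_, ?_, hab, hac, hbc, by omega, by omega⟩ <;> simp <;> grind

lemma equalizable_of_mem (hab : a ≠ b) (hac : a ≠ c) (hbc : b ≠ c)
    (hdb : deg G b = deg G a) (hdc : deg G c = deg G a + 2)
    (hS : G.Adj a b ∨ ¬G.Adj c a ∧ ¬G.Adj c b) (hw : w ≠ a ∧ w ≠ b)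
    (hwc : G.Adj c w ∧ ¬G.Adj a w ∧ ¬G.Adj b w) : Equalizable G := by
  obtain ⟨u₁, h₁, h₁', hw₁, ha₁⟩ := exists_adj_not_adj (G := G) (a := a) (c := c) (by omega) w
  obtain ⟨u₂, h₂, h₂', hw₂, ha₂⟩ := exists_adj_not_adj (G := G) (a := b) (c := c) (by omega) w
  refine equalizable_of_triple (u₁ := u₁) (u₂ := u₂) hab hac hbc hdb hdc hw
    ⟨ha₁, ?_, hw₁⟩ ⟨?_, ha₂, hw₂⟩ hwc ⟨h₁, h₁'⟩ ⟨h₂, h₂'⟩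
  · grind
  · grind [SimpleGraph.adj_comm]

lemma equalizable_of_mem' (hab : a ≠ b) (hac : a ≠ c) (hbc : b ≠ c)
    (hdb : deg G b = deg G a + 2) (hdc : deg G c = deg G a + 2)
    (hS : ¬G.Adj b c ∨ G.Adj a b ∧ G.Adj a c) (hw : w ≠ a)
    (hwc : G.Adj b w ∧ G.Adj c w ∧ ¬G.Adj a w) : Equalizable G := by
  obtain ⟨u₁, h₁, h₁', hw₁, ha₁⟩ := exists_adj_not_adj (G := G) (a := a) (c := b) (by omega) w
  obtain ⟨u₂, h₂, h₂', hw₂, ha₂⟩ := exists_adj_not_adj (G := G) (a := a) (c := c) (by omega) w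
  refine equalizable_of_triple' (u₁ := u₁) (u₂ := u₂) hab hac hbc hdb hdc hw
    ⟨ha₁, ?_, hw₁⟩ ⟨ha₂, ?_, hw₂⟩ hwc ⟨h₁, h₁'⟩ ⟨h₂, h₂'⟩
  · grind
  · grind [SimpleGraph.adj_comm]

variable {v1 v2 v3 v4 : V}

open Classical in
lemma equalizable_of_neighborFinset_sdiff_subset (h13 : v1 ≠ v3) (h14 : v1 ≠ v4) (h34 : v3 ≠ v4)
    (hd2 : deg G v2 = deg G v1) (hd3 : deg G v3 = deg G v1 + 2) (hd4 : deg G v4 = deg G v1 + 2)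
    (hN3 : ∀ u, G.Adj v3 u → G.Adj v1 u ∨ G.Adj v2 u)
    (hsub : G.neighborFinset v4 \ G.neighborFinset v2 ⊆ {v1, v2, v3}) : Equalizable G := by
  obtain ⟨x, hx, hx', -, hxa⟩ := exists_adj_not_adj (G := G) (a := v1) (c := v3) (by omega) v3
  obtain ⟨y, hy, hy', hyx, hya⟩ := exists_adj_not_adj (G := G) (a := v1) (c := v3) (by omega) x
  have key : ∀ u, G.Adj v3 u → ¬G.Adj v1 u → G.Adj v4 u := by
    intro u hu hu1
    by_contra hu4
    have hu2 : G.Adj v2 u := (hN3 u hu).resolve_left hu1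
    have e1 := Finset.card_sdiff_add_card_inter (G.neighborFinset v4) (G.neighborFinset v2)
    have e2 := Finset.card_sdiff_add_card_inter (G.neighborFinset v2) (G.neighborFinset v4)
    rw [Finset.inter_comm] at e2
    simp only [deg_eq_card_neighborFinset] at hd2 hd4
    have hum : u ∈ G.neighborFinset v2 \ G.neighborFinset v4 := by simp [hu2, hu4]
    have h1 := Finset.card_pos.2 ⟨u, hum⟩
    have heq := Finset.eq_of_subset_of_card_le hsub
      (by have := Finset.card_le_three (a := v1) (b := v2) (c := v3); omega)
    have m1 : v1 ∈ G.neighborFinset v4 \ G.neighborFinset v2 := by simp [heq]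
    have m2 : v2 ∈ G.neighborFinset v4 \ G.neighborFinset v2 := by simp [heq]
    simp at m1 m2
    have hm4 : v4 ∈ G.neighborFinset v2 \ G.neighborFinset v4 := by simp [m2.symm]
    have hne : u ≠ v4 := by rintro rfl; exact hu1 m1.1.symm
    have h2 := Finset.one_lt_card.2 ⟨u, hum, v4, hm4, hne⟩
    have h3 := (Finset.card_le_card hsub).trans Finset.card_le_three
    omega
  exact equalizable_of_pair' (a := v1) (b := v3) (c := v4) h13 h14 h34 hd3 hd4 hxa hya hyx.symm
    ⟨hx, key x hx hx', hx'⟩ ⟨hy, key y hy hy', hy'⟩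

open Classical in
lemma equalizable_of_low_adj (h12 : v1 ≠ v2) (h13 : v1 ≠ v3) (h14 : v1 ≠ v4) (h23 : v2 ≠ v3)
    (h24 : v2 ≠ v4) (h34 : v3 ≠ v4)
    (hd2 : deg G v2 = deg G v1) (hd3 : deg G v3 = deg G v1 + 2) (hd4 : deg G v4 = deg G v1 + 2)
    (a12 : G.Adj v1 v2) : Equalizable G := by
  by_contra hcon
  have hN3 : ∀ u, G.Adj v3 u → u ≠ v1 → u ≠ v2 → G.Adj v1 u ∨ G.Adj v2 u := by
    intro u hu hu1 hu2
    by_contra! h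
    exact hcon (equalizable_of_mem h12 h13 h23 hd2 hd3 (.inl a12) ⟨hu1, hu2⟩ ⟨hu, h.1, h.2⟩)
  have eU := Finset.card_union_add_card_inter (G.neighborFinset v3) (G.neighborFinset v4)
  have eL := Finset.card_union_add_card_inter (G.neighborFinset v1) (G.neighborFinset v2)
  have f2 := hd2
  have f3 := hd3
  have f4 := hd4
  simp only [deg_eq_card_neighborFinset] at f2 f3 f4
  have noMem1 : (¬G.Adj v3 v4 ∨ G.Adj v1 v3 ∧ G.Adj v1 v4) →
      ∀ u, G.Adj v3 u → G.Adj v4 u → u ≠ v1 → G.Adj v1 u := by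
    intro h u hu3 hu4 hu1
    by_contra h1
    exact hcon (equalizable_of_mem' h13 h14 h34 hd3 hd4 h hu1 ⟨hu3, hu4, h1⟩)
  have noMem2 : (¬G.Adj v3 v4 ∨ G.Adj v2 v3 ∧ G.Adj v2 v4) →
      ∀ u, G.Adj v3 u → G.Adj v4 u → u ≠ v2 → G.Adj v2 u := by
    intro h u hu3 hu4 hu1
    by_contra h1
    exact hcon (equalizable_of_mem' h23 h24 h34 (by omega) (by omega) h hu1 ⟨hu3, hu4, h1⟩)
  have hN4 : ∀ u, G.Adj v4 u → u ≠ v1 → u ≠ v2 → G.Adj v1 u ∨ G.Adj v2 u := by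
    intro u hu hu1 hu2
    by_contra! h
    exact hcon (equalizable_of_mem h12 h14 h24 hd2 hd4 (.inl a12) ⟨hu1, hu2⟩ ⟨hu, h.1, h.2⟩)
  have hsub : G.neighborFinset v3 ∪ G.neighborFinset v4 ⊆
      G.neighborFinset v1 ∪ G.neighborFinset v2 := by
    intro u hu
    simp at hu ⊢
    by_cases hu1 : u = v1
    · exact .inr (hu1 ▸ a12.symm)
    by_cases hu2 : u = v2
    · exact .inl (hu2 ▸ a12)
    exact hu.elim (hN3 u · hu1 hu2) (hN4 u · hu1 hu2)
  have hle := Finset.card_le_card hsub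
  have hcap (h : (G.Adj v1 v3 ∧ G.Adj v1 v4) ∧ G.Adj v2 v3 ∧ G.Adj v2 v4) : False := by
    have hs : G.neighborFinset v3 ∩ G.neighborFinset v4 ⊆
        (G.neighborFinset v1 ∩ G.neighborFinset v2) ∪ {v1, v2} := by
      intro u hu
      have := noMem1 (.inr h.1) u
      have := noMem2 (.inr h.2) u
      simp at hu ⊢
      grind
    have h1 := (Finset.card_le_card hs).trans (Finset.card_union_le _ _)
    have h2 := Finset.card_le_two (a := v1) (b := v2)
    omega
  have hK1 : ((G.neighborFinset v3 ∩ G.neighborFinset v4).filter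
      fun u ↦ ¬G.Adj v1 u ∧ u ≠ v1).card ≤ 1 := by
    refine Finset.card_le_one.2 fun u hu w hw ↦ ?_
    by_contra hne
    simp at hu hw
    exact hcon (equalizable_of_pair' h13 h14 h34 hd3 hd4 hu.2.2 hw.2.2 hne
      ⟨hu.1.1, hu.1.2, hu.2.1⟩ ⟨hw.1.1, hw.1.2, hw.2.1⟩)
  have hK2 : ((G.neighborFinset v3 ∩ G.neighborFinset v4).filter
      fun u ↦ ¬G.Adj v2 u ∧ u ≠ v2).card ≤ 1 := by
    refine Finset.card_le_one.2 fun u hu w hw ↦ ?_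
    by_contra hne
    simp at hu hw
    exact hcon (equalizable_of_pair' h23 h24 h34 (by omega) (by omega) hu.2.2 hw.2.2 hne
      ⟨hu.1.1, hu.1.2, hu.2.1⟩ ⟨hw.1.1, hw.1.2, hw.2.1⟩)
  have hE : (({v1, v2} : Finset V).filter fun u ↦ G.Adj v3 u ∧ G.Adj v4 u).card ≤ 1 := by
    refine Finset.card_le_one.2 fun u hu w hw ↦ ?_
    by_contra hne
    simp only [Finset.mem_filter, Finset.mem_insert, Finset.mem_singleton] at hu hw
    refine hcap ?_
    grind [SimpleGraph.adj_comm]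
  have hs : G.neighborFinset v3 ∩ G.neighborFinset v4 ⊆
      (G.neighborFinset v1 ∩ G.neighborFinset v2) ∪
      (((G.neighborFinset v3 ∩ G.neighborFinset v4).filter fun u ↦ ¬G.Adj v1 u ∧ u ≠ v1) ∪
      (((G.neighborFinset v3 ∩ G.neighborFinset v4).filter fun u ↦ ¬G.Adj v2 u ∧ u ≠ v2) ∪
      (({v1, v2} : Finset V).filter fun u ↦ G.Adj v3 u ∧ G.Adj v4 u))) := by
    intro u hu
    simp at hu ⊢
    grind
  have h1 := (Finset.card_le_card hs).trans (Finset.card_union_le _ _)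
  have h2 := h1.trans (Nat.add_le_add_left (Finset.card_union_le _ _) _)
  have h3 := Finset.card_union_le
    ((G.neighborFinset v3 ∩ G.neighborFinset v4).filter fun u ↦ ¬G.Adj v2 u ∧ u ≠ v2)
    (({v1, v2} : Finset V).filter fun u ↦ G.Adj v3 u ∧ G.Adj v4 u)
  omega

open Classical in
lemma equalizable_of_low_not_adj (h12 : v1 ≠ v2) (h13 : v1 ≠ v3) (h14 : v1 ≠ v4) (h23 : v2 ≠ v3)
    (h24 : v2 ≠ v4) (h34 : v3 ≠ v4)
    (hd2 : deg G v2 = deg G v1) (hd3 : deg G v3 = deg G v1 + 2) (hd4 : deg G v4 = deg G v1 + 2)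
    (a31 : ¬G.Adj v3 v1) (a32 : ¬G.Adj v3 v2) : Equalizable G := by
  by_contra hcon
  have hN3 : ∀ u, G.Adj v3 u → u ≠ v1 → u ≠ v2 → G.Adj v1 u ∨ G.Adj v2 u := by
    intro u hu hu1 hu2
    by_contra! h
    exact hcon (equalizable_of_mem h12 h13 h23 hd2 hd3 (.inr ⟨a31, a32⟩) ⟨hu1, hu2⟩ ⟨hu, h.1, h.2⟩)
  have eU := Finset.card_union_add_card_inter (G.neighborFinset v3) (G.neighborFinset v4)
  have eL := Finset.card_union_add_card_inter (G.neighborFinset v1) (G.neighborFinset v2)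
  have f2 := hd2
  have f3 := hd3
  have f4 := hd4
  simp only [deg_eq_card_neighborFinset] at f2 f3 f4
  have noMem1 : (¬G.Adj v3 v4 ∨ G.Adj v1 v3 ∧ G.Adj v1 v4) →
      ∀ u, G.Adj v3 u → G.Adj v4 u → u ≠ v1 → G.Adj v1 u := by
    intro h u hu3 hu4 hu1
    by_contra h1
    exact hcon (equalizable_of_mem' h13 h14 h34 hd3 hd4 h hu1 ⟨hu3, hu4, h1⟩)
  have noMem2 : (¬G.Adj v3 v4 ∨ G.Adj v2 v3 ∧ G.Adj v2 v4) →
      ∀ u, G.Adj v3 u → G.Adj v4 u → u ≠ v2 → G.Adj v2 u := by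
    intro h u hu3 hu4 hu1
    by_contra h1
    exact hcon (equalizable_of_mem' h23 h24 h34 (by omega) (by omega) h hu1 ⟨hu3, hu4, h1⟩)
  have hN3' : ∀ u, G.Adj v3 u → G.Adj v1 u ∨ G.Adj v2 u := fun u hu ↦
    hN3 u hu (by rintro rfl; exact a31 hu) (by rintro rfl; exact a32 hu)
  by_cases a34 : G.Adj v3 v4
  · by_cases k2 : G.neighborFinset v4 \ G.neighborFinset v2 ⊆ {v1, v2, v3}
    · exact hcon (equalizable_of_neighborFinset_sdiff_subset h13 h14 h34 hd2 hd3 hd4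
        hN3' k2)
    by_cases k1 : G.neighborFinset v4 \ G.neighborFinset v1 ⊆ {v1, v2, v3}
    · exact hcon (equalizable_of_neighborFinset_sdiff_subset (v1 := v2) (v2 := v1) h23 h24 h34
        hd2.symm (by omega) (by omega) (fun u hu ↦ (hN3' u hu).symm)
        (by rwa [Finset.insert_comm]))
    obtain ⟨x, hx, hx'⟩ := Finset.not_subset.1 k1
    obtain ⟨y, hy, hy'⟩ := Finset.not_subset.1 k2
    simp at hx hx' hy hy'
    exact hcon (equalizable_of_triple (w := v3) h12 h14 h24 hd2 hd4 ⟨h13.symm, h23.symm⟩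
      hx' hy' ⟨a34.symm, fun h ↦ a31 h.symm, fun h ↦ a32 h.symm⟩ hx hy)
  · have hK : ((G.neighborFinset v4).filter
        fun u ↦ ¬G.Adj v1 u ∧ ¬G.Adj v2 u ∧ u ≠ v1 ∧ u ≠ v2).card ≤ 1 := by
      refine Finset.card_le_one.2 fun u hu w hw ↦ ?_
      by_contra hne
      simp at hu hw
      exact hcon (equalizable_of_pair h12 h14 h24 hd2 hd4 hu.2.2.2 hw.2.2.2 hne
        ⟨hu.1, hu.2.1, hu.2.2.1⟩ ⟨hw.1, hw.2.1, hw.2.2.1⟩)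
    have hs : G.neighborFinset v3 ∪ G.neighborFinset v4 ⊆
        (G.neighborFinset v1 ∪ G.neighborFinset v2) ∪ ({v1, v2} ∪
        ((G.neighborFinset v4).filter
          fun u ↦ ¬G.Adj v1 u ∧ ¬G.Adj v2 u ∧ u ≠ v1 ∧ u ≠ v2)) := by
      intro u hu
      have := hN3' u
      simp at hu ⊢
      grind
    have hs' : G.neighborFinset v3 ∩ G.neighborFinset v4 ⊆
        G.neighborFinset v1 ∩ G.neighborFinset v2 := by
      intro u hu
      have := noMem1 (.inl a34) u
      have := noMem2 (.inl a34) u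
      simp at hu ⊢
      grind
    have h1 := (Finset.card_le_card hs).trans (Finset.card_union_le _ _)
    have h2 := h1.trans (Nat.add_le_add_left (Finset.card_union_le _ _) _)
    have h3 := Finset.card_le_card hs'
    have h4 := Finset.card_le_two (a := v1) (b := v2)
    omega

lemma equalizable_of_low_triple (h12 : v1 ≠ v2) (h13 : v1 ≠ v3) (h14 : v1 ≠ v4) (h23 : v2 ≠ v3)
    (h24 : v2 ≠ v4) (h34 : v3 ≠ v4)
    (hd2 : deg G v2 = deg G v1) (hd3 : deg G v3 = deg G v1 + 2) (hd4 : deg G v4 = deg G v1 + 2)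
    (hS : G.Adj v1 v2 ∨ ¬G.Adj v3 v1 ∧ ¬G.Adj v3 v2) : Equalizable G :=
  hS.elim (equalizable_of_low_adj h12 h13 h14 h23 h24 h34 hd2 hd3 hd4)
    fun h ↦ equalizable_of_low_not_adj h12 h13 h14 h23 h24 h34 hd2 hd3 hd4 h.1 h.2

lemma equalizable_of_high_triple (h12 : v1 ≠ v2) (h13 : v1 ≠ v3) (h14 : v1 ≠ v4) (h23 : v2 ≠ v3)
    (h24 : v2 ≠ v4) (h34 : v3 ≠ v4)
    (hd2 : deg G v2 = deg G v1) (hd3 : deg G v3 = deg G v1 + 2) (hd4 : deg G v4 = deg G v1 + 2)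
    (hS : ¬G.Adj v3 v4 ∨ G.Adj v1 v3 ∧ G.Adj v1 v4) : Equalizable G := by
  have e1 := deg_compl (G := G) v1
  have e2 := deg_compl (G := G) v2
  have e3 := deg_compl (G := G) v3
  have e4 := deg_compl (G := G) v4
  refine Equalizable.of_compl (equalizable_of_low_triple (v1 := v3) (v2 := v4) (v3 := v1)
    (v4 := v2) h34 h13.symm h23.symm h14.symm h24.symm h12 (by omega) (by omega) (by omega) ?_)
  simp only [SimpleGraph.compl_adj]
  tauto

end

/-- If `U = {v1,v2,v3,v4}` with `d(v1) = d(v2) = d ≥ 1` and `d(v3) = d(v4) = d + 2`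
contains a balanceable 3-subset, then one can delete at most 3 vertices so that the
resulting induced subgraph has three vertices of equal degree. -/
theorem stmt_5 {V : Type*} [Fintype V] (G : SimpleGraph V) (d : ℕ) (hd : 1 ≤ d)
    (v1 v2 v3 v4 : V) (hdist : [v1, v2, v3, v4].Pairwise (· ≠ ·))
    (h1 : deg G v1 = d) (h2 : deg G v2 = d) (h3 : deg G v3 = d + 2) (h4 : deg G v4 = d + 2)
    (hbal : ∃ x y z : V, x ∈ ({v1, v2, v3, v4} : Set V) ∧ y ∈ ({v1, v2, v3, v4} : Set V) ∧
      z ∈ ({v1, v2, v3, v4} : Set V) ∧ x ≠ y ∧ x ≠ z ∧ y ≠ z ∧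
      deg G x ≤ deg G y ∧ deg G y ≤ deg G z ∧ Balanceable G x y z) :
    ∃ D : Finset V, D.card ≤ 3 ∧ ∃ x y z : V, x ∉ D ∧ y ∉ D ∧ z ∉ D ∧
      x ≠ y ∧ x ≠ z ∧ y ≠ z ∧
      delDeg G D x = delDeg G D y ∧ delDeg G D y = delDeg G D z := by
  change Equalizable G
  simp only [List.pairwise_cons, List.mem_cons, List.not_mem_nil, or_false, forall_eq_or_imp,
    forall_eq] at hdist
  obtain ⟨⟨h12, h13, h14⟩, ⟨h23, h24⟩, h34, -⟩ := hdist
  have A3 := equalizable_of_low_triple (G := G) h12 h13 h14 h23 h24 h34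
    (by omega) (by omega) (by omega)
  have A4 := equalizable_of_low_triple (G := G) h12 h14 h13 h24 h23 h34.symm
    (by omega) (by omega) (by omega)
  have B1 := equalizable_of_high_triple (G := G) h12 h13 h14 h23 h24 h34
    (by omega) (by omega) (by omega)
  have B2 := equalizable_of_high_triple (G := G) h12.symm h23 h24 h13 h14 h34
    (by omega) (by omega) (by omega)
  obtain ⟨x, y, z, hx, hy, hz, hxy, hxz, hyz, hdxy, hdyz, hb⟩ := hbal
  simp only [Set.mem_insert_iff, Set.mem_singleton_iff] at hx hy hz
  have hcases : ((x = v1 ∧ y = v2 ∨ x = v2 ∧ y = v1) ∧ (z = v3 ∨ z = v4)) ∨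
      ((x = v1 ∨ x = v2) ∧ (y = v3 ∧ z = v4 ∨ y = v4 ∧ z = v3)) := by
    clear hb A3 A4 B1 B2
    grind
  have hl := hb.adj_or_not_adj
  have hh := hb.not_adj_or_adj
  have hl' := hl.imp G.adj_symm And.symm
  have hh' := hh.imp (fun h h' ↦ h (G.adj_symm h')) And.symm
  rcases hcases with ⟨⟨rfl, rfl⟩ | ⟨rfl, rfl⟩, rfl | rfl⟩ |
    ⟨rfl | rfl, ⟨rfl, rfl⟩ | ⟨rfl, rfl⟩⟩
  exacts [A3 hl, A4 hl, A3 hl', A4 hl', B1 hh, B1 hh', B2 hh, B2 hh']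
end
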